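/- arXiv:1904.00130 — 2 statements merged into one kernel-verified Lean document; each statement's English description precedes it below -/
import Mathlib

section
/- Let i ∈ Σ_{n+1} and let v_1, …, v_ν be the primitive inward normal vectors of the string inequalities defining the string cone C_i (one inequality per rigorous path). Then no v_j is contained in the convex cone generated by the other vectors v_1, …, v_{j−1}, v_{j+1}, …, v_ν. -/
open scoped Classical

noncomputable section

namespace StringPolytope

/-! ### Words, reduced words, two-moves -/

/-- the simple transposition `s_a = (a, a+1)` acting on `ℕ` (wires are `1, …, n+1`). -/
def sTrans (a : ℕ) : Equiv.Perm ℕ := Equiv.swap a (a + 1)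

/-- product `s_{i₁} ⋯ s_{i_N}` of the simple transpositions of a word. -/
def wordProd (w : List ℕ) : Equiv.Perm ℕ := (w.map sTrans).prod

/-- the longest element `w₀` of the symmetric group on `{1, …, n+1}`,
sending `k ↦ n + 2 - k` there and fixing everything else. -/
def longestPerm (n : ℕ) : Equiv.Perm ℕ :=
  Function.Involutive.toPerm
    (fun k => if 1 ≤ k ∧ k ≤ n + 1 then n + 2 - k else k)
    (by intro k; dsimp only; split_ifs <;> omega)

/-- `w ∈ Σ_{n+1}`: a reduced word of the longest element of `S_{n+1}`,
i.e. a word over `[n] = {1,…,n}` of length `N = n(n+1)/2` whose product is `w₀`. -/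
def IsReduced (n : ℕ) (w : List ℕ) : Prop :=
  w.length = n * (n + 1) / 2 ∧ (∀ a ∈ w, 1 ≤ a ∧ a ≤ n) ∧ wordProd w = longestPerm n

/-- a single 2-move: exchange two adjacent letters `(a, b)` with `|a - b| > 1`. -/
def TwoMoveStep (w w' : List ℕ) : Prop :=
  ∃ u v a b, (a + 1 < b ∨ b + 1 < a) ∧ w = u ++ a :: b :: v ∧ w' = u ++ b :: a :: v

/-- 2-move equivalence of words. -/
def TwoMoveEquiv : List ℕ → List ℕ → Prop := Relation.ReflTransGen TwoMoveStep

/-- `A_n = (1, 2, …, n)`. -/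
def ascWord (n : ℕ) : List ℕ := (List.range n).map (· + 1)

/-- `D_n = (n, n-1, …, 1)`. -/
def descWord (n : ℕ) : List ℕ := (ascWord n).reverse

/-! ### The wiring diagram -/

/-- the letter `i_j` of `w` (1-based index `j`); the node `t_j` lies in column `i_j`. -/
def letterAt (w : List ℕ) (j : ℕ) : ℕ := w.getD (j - 1) 0

/-- `1 ≤ j ≤ N`: `t_j` is an actual node of the diagram. -/
def ValidNode (w : List ℕ) (j : ℕ) : Prop := 1 ≤ j ∧ j ≤ w.length

/-- the column-to-wire assignment just above node `t_j`
(at the top of the diagram, wire `k` is in column `k`). -/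
def stateAbove (w : List ℕ) (j : ℕ) : Equiv.Perm ℕ := wordProd (w.take (j - 1))

/-- the column-to-wire assignment just below node `t_j`. -/
def stateBelow (w : List ℕ) (j : ℕ) : Equiv.Perm ℕ := wordProd (w.take j)

/-- one of the two wires crossing at node `t_j` (the one leaving upward-left). -/
def wireX (w : List ℕ) (j : ℕ) : ℕ := stateAbove w j (letterAt w j)

/-- the other wire crossing at node `t_j` (the one leaving upward-right). -/
def wireY (w : List ℕ) (j : ℕ) : ℕ := stateAbove w j (letterAt w j + 1)

/-- the node `t_j` lies on the wire `ℓ_r`. -/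
def NodeOnWire (w : List ℕ) (j r : ℕ) : Prop := wireX w j = r ∨ wireY w j = r

/-- given one wire `r` at node `t_j`, the other wire crossing there. -/
def otherWire (w : List ℕ) (j r : ℕ) : ℕ := if wireX w j = r then wireY w j else wireX w j

/-- the column of wire `ℓ_r` at the height of node `t_j`. -/
def wireCol (w : List ℕ) (j r : ℕ) : ℕ := (stateBelow w j).symm r

/-- node `t_j` lies strictly below the wire `ℓ_{n+1}`
(which runs from the bottom-left corner to the top-right corner). -/
def BelowWireLast (n : ℕ) (w : List ℕ) (j : ℕ) : Prop :=
  wireCol w j (n + 1) < letterAt w j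

/-- node `t_j` lies strictly above the wire `ℓ_{n+1}`. -/
def AboveWireLast (n : ℕ) (w : List ℕ) (j : ℕ) : Prop :=
  letterAt w j + 1 < wireCol w j (n + 1)

/-- node `t_j` lies strictly below the wire `ℓ_1`
(which runs from the bottom-right corner to the top-left corner). -/
def BelowWireOne (w : List ℕ) (j : ℕ) : Prop :=
  letterAt w j + 1 < wireCol w j 1

/-- node `t_j` lies strictly above the wire `ℓ_1`. -/
def AboveWireOne (w : List ℕ) (j : ℕ) : Prop :=
  wireCol w j 1 < letterAt w j

/-! ### Rigorous (Gleizer–Postnikov) paths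

A path in `G(i, k)` is encoded by `k` together with the list of its switching
nodes, in order of travel.  Wires `ℓ_1, …, ℓ_k` are oriented upward
(decreasing node index) and the remaining wires downward. -/

/-- the (1-based indices of the) nodes lying on wire `ℓ_r`, in order of increasing index. -/
def nodesOn (w : List ℕ) (r : ℕ) : List ℕ :=
  ((List.range w.length).map (· + 1)).filter (fun j => decide (NodeOnWire w j r))

/-- nodes on wire `ℓ_r` strictly between the nodes `t_a` and `t_b`. -/
def segList (w : List ℕ) (r a b : ℕ) : List ℕ :=
  (nodesOn w r).filter (fun j => decide (min a b < j ∧ j < max a b))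

/-- nodes on wire `ℓ_r` strictly below the node `t_a`. -/
def tailList (w : List ℕ) (r a : ℕ) : List ℕ :=
  (nodesOn w r).filter (fun j => decide (a < j))

/-- a forbidden fragment of `G(i, k)`: the path passes straight through node `t_j`
travelling along the wire `ℓ_r`, where the other wire `ℓ_b` crossing there has the same
orientation as `ℓ_r` and (`r < b` if both upward, `r > b` if both downward). -/
def Forbidden (w : List ℕ) (k j r : ℕ) : Prop :=
  (r ≤ k ∧ otherWire w j r ≤ k ∧ r < otherWire w j r) ∨
  (k < r ∧ k < otherWire w j r ∧ otherWire w j r < r)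

/-- travelling in `G(i,k)`: currently on wire `ℓ_r` at node `t_a` (just switched there),
with future switching nodes `ms`; the travel is legal and ends at `L_{k+1}`. -/
def TravelOK (w : List ℕ) (k : ℕ) : ℕ → ℕ → List ℕ → Prop
  | r, a, [] => r = k + 1 ∧ ∀ j ∈ tailList w r a, ¬ Forbidden w k j r
  | r, a, m :: ms =>
      ValidNode w m ∧ NodeOnWire w m r ∧
      (if r ≤ k then m < a else a < m) ∧
      (∀ j ∈ segList w r a m, ¬ Forbidden w k j r) ∧
      TravelOK w k (otherWire w m r) m ms

/-- all nodes visited after the switch at node `t_a` onto wire `ℓ_r`. -/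
def visitTail (w : List ℕ) : ℕ → ℕ → List ℕ → List ℕ
  | r, a, [] => tailList w r a
  | r, a, m :: ms => segList w r a m ++ m :: visitTail w (otherWire w m r) m ms

/-- the list of all nodes visited by the path (switching nodes and straight passes). -/
def visitList (w : List ℕ) (k : ℕ) : List ℕ → List ℕ
  | [] => []
  | m :: ms => tailList w k m ++ m :: visitTail w (otherWire w m k) m ms

/-- `(k, ms)` encodes a rigorous (Gleizer–Postnikov) path in `G(i, k)`:
it starts at `L_k` going up the wire `ℓ_k`, switches wires exactly at the nodes
listed in `ms`, respects the orientation, ends at `L_{k+1}`, contains no forbidden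
fragment and passes through each node at most once. -/
def IsGPPath (n : ℕ) (w : List ℕ) (k : ℕ) (ms : List ℕ) : Prop :=
  1 ≤ k ∧ k ≤ n ∧
  (match ms with
   | [] => False
   | m :: rest =>
       ValidNode w m ∧ NodeOnWire w m k ∧
       (∀ j ∈ tailList w k m, ¬ Forbidden w k j k) ∧
       TravelOK w k (otherWire w m k) m rest) ∧
  (visitList w k ms).Nodup

/-- the set `GP(i)` of all rigorous paths of `G(i)`. -/
def GP (n : ℕ) (w : List ℕ) : Set (ℕ × List ℕ) := {p | IsGPPath n w p.1 p.2}

/-- `|GP(i)|`, the number of rigorous paths. -/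
def numGP (n : ℕ) (w : List ℕ) : ℕ := (GP n w).ncard

/-- the successive switches of a path: `(node, from-wire, to-wire)`. -/
def pathSwitches (w : List ℕ) : ℕ → List ℕ → List (ℕ × ℕ × ℕ)
  | _, [] => []
  | r, m :: ms => (m, r, otherWire w m r) :: pathSwitches w (otherWire w m r) ms

/-- the wire-expression of a path: the successive wires travelled. -/
def wireSeq (w : List ℕ) : ℕ → List ℕ → List ℕ
  | r, [] => [r]
  | r, m :: ms => r :: wireSeq w (otherWire w m r) ms

/-- the peaks of a path: switching nodes where the path switches from an
upward wire to a downward wire. -/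
def peaks (w : List ℕ) (k : ℕ) (ms : List ℕ) : List ℕ :=
  ((pathSwitches w k ms).filter (fun e => decide (e.2.1 ≤ k ∧ k < e.2.2))).map (·.1)

/-! ### String cone, `λ`-cone, string polytope -/

/-- `N = n(n+1)/2`, the number of nodes. -/
abbrev Dim (n : ℕ) : ℕ := n * (n + 1) / 2

/-- the coefficient `a_j` of `t_j` in the string inequality of the path `(k, ms)`:
`+1` if the path switches at `t_j` from `ℓ_r` to `ℓ_s` with `r < s`,
`-1` if it switches with `r > s`, and `0` otherwise. -/
def coeff (w : List ℕ) (k : ℕ) (ms : List ℕ) (j : ℕ) : ℝ :=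
  ((pathSwitches w k ms).map (fun e =>
    if e.1 = j then (if e.2.1 < e.2.2 then (1 : ℝ) else -1) else 0)).sum

/-- the (primitive inward normal) coefficient vector of the string inequality of a path. -/
def normalVec (n : ℕ) (w : List ℕ) (p : ℕ × List ℕ) : Fin (Dim n) → ℝ :=
  fun j => coeff w p.1 p.2 ((j : ℕ) + 1)

/-- the left-hand side `∑ a_j t_j` of the string inequality of the path `p`. -/
def stringIneq (n : ℕ) (w : List ℕ) (p : ℕ × List ℕ) (t : Fin (Dim n) → ℝ) : ℝ :=
  ∑ j : Fin (Dim n), normalVec n w p j * t j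

/-- the string cone `C_i ⊆ ℝ^N`. -/
def stringCone (n : ℕ) (w : List ℕ) : Set (Fin (Dim n) → ℝ) :=
  {t | ∀ p ∈ GP n w, 0 ≤ stringIneq n w p t}

/-- the polyhedron cut out by all string inequalities except the one of `p₀`. -/
def stringConeExcept (n : ℕ) (w : List ℕ) (p₀ : ℕ × List ℕ) : Set (Fin (Dim n) → ℝ) :=
  {t | ∀ p ∈ GP n w, p ≠ p₀ → 0 ≤ stringIneq n w p t}

/-- the coefficient `a_k` in the `λ`-inequality of node `t_j`:
`1` if `t_k` is one column left or right of `t_j`, `-2` if in the same column. -/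
def lamCoeff (w : List ℕ) (j k : ℕ) : ℝ :=
  if letterAt w k = letterAt w j then -2
  else if letterAt w k = letterAt w j + 1 ∨ letterAt w k + 1 = letterAt w j then 1
  else 0

/-- the `λ`-inequality of node `t_{j+1}`:
`t_j ≤ λ_{i_j} + ∑_{k > j} a_k t_k`. -/
def LamIneq (n : ℕ) (w : List ℕ) (lam : ℕ → ℤ) (j : Fin (Dim n)) (t : Fin (Dim n) → ℝ) : Prop :=
  t j ≤ (lam (letterAt w ((j : ℕ) + 1)) : ℝ) +
    ∑ k : Fin (Dim n),
      (if (j : ℕ) < (k : ℕ) then lamCoeff w ((j : ℕ) + 1) ((k : ℕ) + 1) else 0) * t k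

/-- the `λ`-cone `C_i^λ ⊆ ℝ^N`. -/
def lamCone (n : ℕ) (w : List ℕ) (lam : ℕ → ℤ) : Set (Fin (Dim n) → ℝ) :=
  {t | ∀ j, LamIneq n w lam j t}

/-- the polyhedron cut out by all `λ`-inequalities except the one of `j₀`. -/
def lamConeExcept (n : ℕ) (w : List ℕ) (lam : ℕ → ℤ) (j₀ : Fin (Dim n)) :
    Set (Fin (Dim n) → ℝ) :=
  {t | ∀ j, j ≠ j₀ → LamIneq n w lam j t}

/-- the string polytope `Δ_i(λ) = C_i ∩ C_i^λ`. -/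
def stringPolytope (n : ℕ) (w : List ℕ) (lam : ℕ → ℤ) : Set (Fin (Dim n) → ℝ) :=
  stringCone n w ∩ lamCone n w lam

/-- `λ = λ_1 ϖ_1 + ⋯ + λ_n ϖ_n` is a dominant integral weight: all `λ_j ≥ 0`. -/
def Dominant (n : ℕ) (lam : ℕ → ℤ) : Prop := ∀ j, 1 ≤ j → j ≤ n → 0 ≤ lam j

/-- `λ` is a regular dominant integral weight: all `λ_j > 0`. -/
def RegularDominant (n : ℕ) (lam : ℕ → ℤ) : Prop := ∀ j, 1 ≤ j → j ≤ n → 0 < lam j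

/-! ### Unimodular equivalence, Gelfand–Cetlin polytope, facets -/

/-- `P` and `Q` are unimodularly equivalent: `Q = M(P) + v` with `M ∈ GL(m, ℤ)`, `v ∈ ℤ^m`. -/
def UnimodEquiv {m : ℕ} (P Q : Set (Fin m → ℝ)) : Prop :=
  ∃ (M : Matrix (Fin m) (Fin m) ℤ) (v : Fin m → ℤ), IsUnit M.det ∧
    Q = (fun x i => (∑ j, (M i j : ℝ) * x j) + (v i : ℝ)) '' P

/-- the entry `x_{k,j}` (`1 ≤ j ≤ k ≤ n+1`) of a Gelfand–Cetlin pattern, where the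
top row is `x_{n+1,j} = λ_j + ⋯ + λ_n` and `x_{n+1,n+1} = 0`; the pair `(k, j)` is
encoded as the coordinate `k(k-1)/2 + (j-1)` of `ℝ^N`. -/
def gcX (n : ℕ) (lam : ℕ → ℤ) (x : Fin (Dim n) → ℝ) (k j : ℕ) : ℝ :=
  if k = n + 1 then (if j ≤ n then ∑ t ∈ Finset.Icc j n, (lam t : ℝ) else 0)
  else if h : k * (k - 1) / 2 + (j - 1) < Dim n then x ⟨k * (k - 1) / 2 + (j - 1), h⟩ else 0

/-- the Gelfand–Cetlin polytope `GC(λ) ⊆ ℝ^N`. -/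
def GCPolytope (n : ℕ) (lam : ℕ → ℤ) : Set (Fin (Dim n) → ℝ) :=
  {x | ∀ k j, 1 ≤ k → k ≤ n → 1 ≤ j → j ≤ k →
      gcX n lam x k j ≤ gcX n lam x (k + 1) j ∧
      gcX n lam x (k + 1) (j + 1) ≤ gcX n lam x k j}

/-- a face of a convex set: a convex extreme subset. -/
def IsFaceSet {m : ℕ} (S F : Set (Fin m → ℝ)) : Prop := IsExtreme ℝ S F ∧ Convex ℝ F

/-- a facet: a maximal proper face. -/
def IsFacet {m : ℕ} (S F : Set (Fin m → ℝ)) : Prop :=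
  IsFaceSet S F ∧ F ≠ S ∧ ∀ G, IsFaceSet S G → G ≠ S → F ⊆ G → F = G

/-- the number of facets. -/
def numFacets {m : ℕ} (S : Set (Fin m → ℝ)) : ℕ := {F | IsFacet S F}.ncard

/-- combinatorial equivalence: an inclusion-preserving bijection between face lattices. -/
def CombEquiv {m : ℕ} (S T : Set (Fin m → ℝ)) : Prop :=
  ∃ e : {F // IsFaceSet S F} ≃ {F // IsFaceSet T F},
    ∀ F G : {F // IsFaceSet S F}, F.1 ⊆ G.1 ↔ (e F).1 ⊆ (e G).1

/-! ### Indices, contractions and extensions -/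

/-- the `D`-index `ind_D(i) = |i_D^+|` for a decomposition `i ∼ i_D^- D_n i_D^+`
(independent of the decomposition). -/
def indD (n : ℕ) (w : List ℕ) : ℕ :=
  sInf {s | ∃ u v : List ℕ, v.length = s ∧ TwoMoveEquiv w (u ++ descWord n ++ v)}

/-- the `A`-index `ind_A(i) = |i_A^+|` for a decomposition `i ∼ i_A^- A_n i_A^+`. -/
def indA (n : ℕ) (w : List ℕ) : ℕ :=
  sInf {s | ∃ u v : List ℕ, v.length = s ∧ TwoMoveEquiv w (u ++ ascWord n ++ v)}

/-- `w'` is a `D`-contraction `C_D(w) = i_D^- (i_D^+ - 1)` of `w ∈ Σ_{n+1}`. -/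
def IsContractionD (n : ℕ) (w w' : List ℕ) : Prop :=
  ∃ u v : List ℕ, TwoMoveEquiv w (u ++ descWord n ++ v) ∧ w' = u ++ v.map (· - 1)

/-- `w'` is an `A`-contraction `C_A(w) = (i_A^- - 1) i_A^+` of `w ∈ Σ_{n+1}`. -/
def IsContractionA (n : ℕ) (w w' : List ℕ) : Prop :=
  ∃ u v : List ℕ, TwoMoveEquiv w (u ++ ascWord n ++ v) ∧ w' = u.map (· - 1) ++ v

/-- the `D`-extension `E_D(s) : Σ_{n+1} → Σ_{n+2}`,
`i = i^-(s) i^+(s) ↦ i^-(s) D_{n+1} (i^+(s) + 1)` where `|i^+(s)| = s`. -/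
def extD (n : ℕ) (s : ℕ) (w : List ℕ) : List ℕ :=
  w.take (w.length - s) ++ descWord (n + 1) ++ (w.drop (w.length - s)).map (· + 1)

/-- the `A`-extension `E_A(s) : Σ_{n+1} → Σ_{n+2}`,
`i = i^-(s) i^+(s) ↦ (i^-(s) + 1) A_{n+1} i^+(s)`. -/
def extA (n : ℕ) (s : ℕ) (w : List ℕ) : List ℕ :=
  (w.take (w.length - s)).map (· + 1) ++ ascWord (n + 1) ++ w.drop (w.length - s)

/-- there exists `(σ_1, …, σ_n) ∈ {A, D}^n` (here `true = D`, `false = A`) such that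
`ind_{σ_k}(C_{σ_{k+1}} ∘ ⋯ ∘ C_{σ_n}(i)) = 0` for all `k = n, …, 1`. -/
def SimplicialWord (n : ℕ) (w : List ℕ) : Prop :=
  ∃ (σ : ℕ → Bool) (c : ℕ → List ℕ), c n = w ∧
    ∀ k, 1 ≤ k → k ≤ n →
      (if σ k then IsContractionD k (c k) (c (k - 1)) ∧ indD k (c k) = 0
       else IsContractionA k (c k) (c (k - 1)) ∧ indA k (c k) = 0)


/-- the `D`-coindex `coind_D(i) = |i_D^-|`. -/
def coindD (n : ℕ) (w : List ℕ) : ℕ :=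
  sInf {s | ∃ u v : List ℕ, u.length = s ∧ TwoMoveEquiv w (u ++ descWord n ++ v)}

/-- the `A`-coindex `coind_A(i) = |i_A^-|`. -/
def coindA (n : ℕ) (w : List ℕ) : ℕ :=
  sInf {s | ∃ u v : List ℕ, u.length = s ∧ TwoMoveEquiv w (u ++ ascWord n ++ v)}

/-- the `a`-th (0-based) coordinate of a point of `ℝ^N`. -/
def entry (n : ℕ) (t : Fin (Dim n) → ℝ) (a : ℕ) : ℝ :=
  if h : a < Dim n then t ⟨a, h⟩ else 0

/-- the product of cones
`t_1 ≥ 0`, `t_2 ≥ t_3 ≥ 0`, …, `t_{N-n+1} ≥ ⋯ ≥ t_N ≥ 0` (in `ℝ^N`, 1-based: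
for `k = 1, …, n` the chain `t_{k(k-1)/2+1} ≥ ⋯ ≥ t_{k(k-1)/2+k} ≥ 0`). -/
def chainCone (n : ℕ) : Set (Fin (Dim n) → ℝ) :=
  {t | ∀ k j, 1 ≤ k → k ≤ n → 1 ≤ j → j ≤ k →
    (if j = k then 0 else entry n t (k * (k - 1) / 2 + j)) ≤
      entry n t (k * (k - 1) / 2 + (j - 1))}

/-! ### Auxiliary facts: the flow of a path along a wire -/

lemma wireX_ne_wireY (w : List ℕ) (j : ℕ) : wireX w j ≠ wireY w j := by
  unfold wireX wireY
  intro h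
  have := (stateAbove w j).injective h
  omega

lemma otherWire_ne (w : List ℕ) (j r : ℕ) (h : NodeOnWire w j r) : otherWire w j r ≠ r := by
  have := wireX_ne_wireY w j
  unfold otherWire
  unfold NodeOnWire at h
  split_ifs with h1
  · intro h2; exact this (h1.trans h2.symm)
  · exact h1

lemma otherWire_otherWire (w : List ℕ) (j r : ℕ) (h : NodeOnWire w j r) :
    otherWire w j (otherWire w j r) = r := by
  have := wireX_ne_wireY w j
  unfold NodeOnWire at h
  unfold otherWire
  grind

lemma nodeOnWire_iff (w : List ℕ) (j r r0 : ℕ) (h : NodeOnWire w j r) :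
    NodeOnWire w j r0 ↔ r0 = r ∨ r0 = otherWire w j r := by
  unfold NodeOnWire at *
  unfold otherWire
  grind

/-- sign of the node `t_j` seen from wire `r`. -/
def sgn (w : List ℕ) (r j : ℕ) : ℝ :=
  if NodeOnWire w j r then (if r < otherWire w j r then 1 else -1) else 0

/-- the flow on wire `r` just below height `h`, as a linear function of the normal vector. -/
def flow (n : ℕ) (w : List ℕ) (r h : ℕ) (x : Fin (Dim n) → ℝ) : ℝ :=
  ∑ j : Fin (Dim n), if (j : ℕ) + 1 ≤ h then sgn w r (j + 1) * x j else 0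

/-- the same flow, computed from the switches of the path. -/
def pflow (w : List ℕ) (r0 h : ℕ) : ℕ → List ℕ → ℤ
  | _, [] => 0
  | r, m :: ms =>
      (if m ≤ h then (if r = r0 then 1 else 0) - (if otherWire w m r = r0 then 1 else 0) else 0)
        + pflow w r0 h (otherWire w m r) ms

lemma flow_sum (n : ℕ) (w : List ℕ) (r h : ℕ) {ι : Type*} (F : Finset ι) (c : ι → ℝ)
    (v : ι → Fin (Dim n) → ℝ) :
    flow n w r h (∑ q ∈ F, c q • v q) = ∑ q ∈ F, c q * flow n w r h (v q) := by
  unfold flow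
  simp_rw [Finset.mul_sum]
  rw [Finset.sum_comm]
  refine Finset.sum_congr rfl fun j _ => ?_
  split_ifs
  · simp only [Finset.sum_apply, Pi.smul_apply, smul_eq_mul, Finset.mul_sum]
    exact Finset.sum_congr rfl fun q _ => by ring
  · simp

lemma coeff_cons (w : List ℕ) (r m : ℕ) (ms : List ℕ) (j : ℕ) :
    coeff w r (m :: ms) j =
      (if m = j then (if r < otherWire w m r then (1 : ℝ) else -1) else 0)
        + coeff w (otherWire w m r) ms j := by
  simp [coeff, pathSwitches]

lemma flow_cons (n : ℕ) (w : List ℕ) (r0 h r m : ℕ) (ms : List ℕ) (h1 : 1 ≤ m)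
    (h2 : m ≤ Dim n) (hm : NodeOnWire w m r) :
    flow n w r0 h (normalVec n w (r, m :: ms)) =
      (((if m ≤ h then (if r = r0 then 1 else 0) -
        (if otherWire w m r = r0 then 1 else 0) else 0) : ℤ) : ℝ)
        + flow n w r0 h (normalVec n w (otherWire w m r, ms)) := by
  have key : sgn w r0 m * (if r < otherWire w m r then (1 : ℝ) else -1)
      = (((if r = r0 then 1 else 0) - (if otherWire w m r = r0 then 1 else 0) : ℤ) : ℝ) := by
    have a1 := otherWire_ne w m r hm
    have a2 := otherWire_otherWire w m r hm
    have a3 := nodeOnWire_iff w m r r0 hm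
    unfold sgn
    by_cases c1 : r = r0
    · subst c1
      rw [if_pos hm]
      simp [a1]
      split_ifs <;> norm_num
    · by_cases c2 : otherWire w m r = r0
      · rw [if_pos (a3.2 (Or.inr c2.symm)), ← c2, a2]
        simp [Ne.symm a1]
        split_ifs <;> first | omega | norm_num
      · rw [if_neg]
        · simp [c1, c2]
        · rw [a3]; rintro (h | h)
          · exact c1 h.symm
          · exact c2 h.symm
  have e : ∀ j : Fin (Dim n), (if (j : ℕ) + 1 ≤ h then
        sgn w r0 (j + 1) * normalVec n w (r, m :: ms) j else 0) =
      (if j = (⟨m - 1, by omega⟩ : Fin (Dim n)) then (if m ≤ h then sgn w r0 m *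
          (if r < otherWire w m r then (1 : ℝ) else -1) else 0) else 0) +
      (if (j : ℕ) + 1 ≤ h then
        sgn w r0 (j + 1) * normalVec n w (otherWire w m r, ms) j else 0) := by
    intro j
    simp only [normalVec, coeff_cons, Fin.ext_iff]
    by_cases c : m = (j : ℕ) + 1
    · have c' : (j : ℕ) = m - 1 := by omega
      rw [if_pos c, if_pos c', ← c]
      split_ifs <;> ring
    · have c' : ¬ (j : ℕ) = m - 1 := by omega
      rw [if_neg c, if_neg c']
      ring_nf
  unfold flow
  rw [Finset.sum_congr rfl fun j _ => e j, Finset.sum_add_distrib, Finset.sum_ite_eq']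
  rw [if_pos (Finset.mem_univ _), key]
  congr 1
  split_ifs <;> simp

lemma flow_eq_pflow (n : ℕ) (w : List ℕ) (hw : w.length = Dim n) (k r0 h : ℕ) (ms : List ℕ) :
    ∀ r a, TravelOK w k r a ms →
      flow n w r0 h (normalVec n w (r, ms)) = (pflow w r0 h r ms : ℝ) := by
  induction ms with
  | nil => intro r a _; simp [flow, normalVec, coeff, pathSwitches, pflow]
  | cons m ms ih =>
    intro r a ht
    obtain ⟨hv, hon, -, -, ht⟩ := ht
    rw [flow_cons n w r0 h r m ms hv.1 (hw ▸ hv.2) hon, ih _ _ ht, pflow]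
    push_cast
    ring

lemma pflow_total (w : List ℕ) (k r0 h : ℕ) (hh : w.length ≤ h) (ms : List ℕ) :
    ∀ r a, TravelOK w k r a ms →
      pflow w r0 h r ms = (if r = r0 then 1 else 0) - (if k + 1 = r0 then 1 else 0) := by
  induction ms with
  | nil => intro r a ht; rw [ht.1]; simp [pflow]
  | cons m ms ih =>
    intro r a ht
    obtain ⟨hv, -, -, -, ht⟩ := ht
    rw [pflow, ih _ _ ht, if_pos (hv.2.trans hh)]
    ring

lemma mem_nodesOn (w : List ℕ) (r j : ℕ) :
    j ∈ nodesOn w r ↔ ValidNode w j ∧ NodeOnWire w j r := by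
  simp only [nodesOn, ValidNode, List.mem_filter, List.mem_map, List.mem_range, decide_eq_true_eq]
  constructor
  · rintro ⟨⟨a, ha, rfl⟩, h⟩; exact ⟨⟨by omega, by omega⟩, h⟩
  · rintro ⟨⟨h1, h2⟩, h⟩; exact ⟨⟨j - 1, by omega, by omega⟩, h⟩

lemma mem_segList (w : List ℕ) (r a b j : ℕ) :
    j ∈ segList w r a b ↔
      (ValidNode w j ∧ NodeOnWire w j r) ∧ min a b < j ∧ j < max a b := by
  simp only [segList, List.mem_filter, mem_nodesOn, decide_eq_true_eq]

lemma mem_tailList (w : List ℕ) (r a j : ℕ) :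
    j ∈ tailList w r a ↔ (ValidNode w j ∧ NodeOnWire w j r) ∧ a < j := by
  simp only [tailList, List.mem_filter, mem_nodesOn, decide_eq_true_eq]

lemma count_pos_int {l : List ℕ} {j : ℕ} (h : j ∈ l) : (1 : ℤ) ≤ (l.count j : ℤ) := by
  have := List.count_pos_iff.2 h
  omega

lemma pflow_up (w : List ℕ) (k r0 j : ℕ) (hr : r0 ≤ k) (hj : ValidNode w j)
    (hjr : NodeOnWire w j r0) (ms : List ℕ) :
    ∀ r a, TravelOK w k r a ms →
      0 ≤ pflow w r0 j r ms - (if r = r0 ∧ a ≤ j then 1 else 0) ∧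
      pflow w r0 j r ms - (if r = r0 ∧ a ≤ j then 1 else 0)
        ≤ ((visitTail w r a ms).count j : ℤ) := by
  induction ms with
  | nil =>
    intro r a ht
    have : r ≠ r0 := by have := ht.1; omega
    simp [pflow, this]
  | cons m ms ih =>
    intro r a ht
    obtain ⟨hv, hon, hdir, -, ht⟩ := ht
    obtain ⟨i1, i2⟩ := ih _ _ ht
    rw [pflow, visitTail, List.count_append, List.count_cons]
    push_cast
    by_cases c : r = r0
    · subst c
      rw [if_pos hr] at hdir
      by_cases d : m ≤ j ∧ ¬ a ≤ j
      · have hc : (1 : ℤ) ≤ ((segList w r a m).count j : ℤ) + (if (m == j) = true then 1 else 0) := by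
          by_cases e : m = j
          · simp [e]
          · have : j ∈ segList w r a m := by
              rw [mem_segList]; refine ⟨⟨hj, hjr⟩, ?_, ?_⟩ <;> simp <;> omega
            have := count_pos_int this
            split_ifs <;> omega
        have : (0 : ℤ) ≤ (segList w r a m).count j := by positivity
        grind
      · have : (0 : ℤ) ≤ (segList w r a m).count j := by positivity
        grind
    · have : (0 : ℤ) ≤ (segList w r a m).count j := by positivity
      grind

lemma pflow_down (w : List ℕ) (k r0 j : ℕ) (hr : k < r0) (hj : ValidNode w j)
    (hjr : NodeOnWire w j r0) (ms : List ℕ) :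
    ∀ r a, TravelOK w k r a ms →
      0 ≤ (if r = r0 ∧ a ≤ j - 1 then 1 else 0) - pflow w r0 (j - 1) r ms ∧
      (if r = r0 ∧ a ≤ j - 1 then 1 else 0) - pflow w r0 (j - 1) r ms
        ≤ ((visitTail w r a ms).count j : ℤ) := by
  have hj1 := hj.1
  induction ms with
  | nil =>
    intro r a ht
    rw [pflow, visitTail]
    by_cases d : r = r0 ∧ a ≤ j - 1
    · obtain ⟨rfl, d⟩ := d
      have : j ∈ tailList w r a := by
        rw [mem_tailList]; exact ⟨⟨hj, hjr⟩, by omega⟩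
      have := count_pos_int this
      simp [d]; omega
    · simp [d]
  | cons m ms ih =>
    intro r a ht
    obtain ⟨hv, hon, hdir, -, ht⟩ := ht
    obtain ⟨i1, i2⟩ := ih _ _ ht
    rw [pflow, visitTail, List.count_append, List.count_cons]
    push_cast
    by_cases c : r = r0
    · subst c
      rw [if_neg (by omega)] at hdir
      by_cases d : a ≤ j - 1 ∧ ¬ m ≤ j - 1
      · have hc : (1 : ℤ) ≤ ((segList w r a m).count j : ℤ) + (if (m == j) = true then 1 else 0) := by
          by_cases e : m = j
          · simp [e]
          · have : j ∈ segList w r a m := by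
              rw [mem_segList]; refine ⟨⟨hj, hjr⟩, ?_, ?_⟩ <;> simp <;> omega
            have := count_pos_int this
            split_ifs <;> omega
        have : (0 : ℤ) ≤ (segList w r a m).count j := by positivity
        grind
      · have : (0 : ℤ) ≤ (segList w r a m).count j := by positivity
        grind
    · have : (0 : ℤ) ≤ (segList w r a m).count j := by positivity
      grind

lemma gp_up (n : ℕ) (w : List ℕ) (k r0 j : ℕ) (hr : r0 ≤ k) (hj : ValidNode w j)
    (hjr : NodeOnWire w j r0) (ms : List ℕ) (hp : IsGPPath n w k ms) :
    pflow w r0 j k ms = 0 ∨ pflow w r0 j k ms = 1 := by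
  obtain ⟨-, -, h, hnd⟩ := hp
  have hcount := List.nodup_iff_count_le_one.1 hnd j
  match ms, h with
  | m :: ms, ⟨hv, hon, _, ht⟩ =>
    obtain ⟨i1, i2⟩ := pflow_up w k r0 j hr hj hjr ms _ _ ht
    rw [visitList, List.count_append, List.count_cons] at hcount
    rw [pflow]
    have hc : k = r0 → m ≤ j → 1 ≤ (tailList w k m).count j + (if (m == j) = true then 1 else 0) := by
      rintro rfl d
      by_cases e : m = j
      · simp [e]
      · have : j ∈ tailList w k m := by
          rw [mem_tailList]; exact ⟨⟨hj, hjr⟩, by omega⟩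
        have := List.count_pos_iff.2 this
        omega
    grind

lemma gp_down (n : ℕ) (w : List ℕ) (k r0 j : ℕ) (hr : k < r0) (hj : ValidNode w j)
    (hjr : NodeOnWire w j r0) (ms : List ℕ) (hp : IsGPPath n w k ms) :
    pflow w r0 (j - 1) k ms = 0 ∨ pflow w r0 (j - 1) k ms = -1 := by
  obtain ⟨-, -, h, hnd⟩ := hp
  have hcount := List.nodup_iff_count_le_one.1 hnd j
  match ms, h with
  | m :: ms, ⟨hv, hon, _, ht⟩ =>
    obtain ⟨i1, i2⟩ := pflow_down w k r0 j hr hj hjr ms _ _ ht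
    rw [visitList, List.count_append, List.count_cons] at hcount
    rw [pflow]
    have hne : k ≠ r0 := by omega
    grind

lemma gp_flow (n : ℕ) (w : List ℕ) (hw : w.length = Dim n) (k r0 h : ℕ) (ms : List ℕ)
    (hp : IsGPPath n w k ms) :
    flow n w r0 h (normalVec n w (k, ms)) = (pflow w r0 h k ms : ℝ) := by
  obtain ⟨-, -, hh, -⟩ := hp
  match ms, hh with
  | m :: ms, ⟨hv, hon, _, ht⟩ =>
    rw [flow_cons n w r0 h k m ms hv.1 (hw ▸ hv.2) hon, flow_eq_pflow n w hw k r0 h ms _ _ ht, pflow]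
    push_cast
    ring

lemma gp_total (n : ℕ) (w : List ℕ) (k r0 h : ℕ) (hh : w.length ≤ h) (ms : List ℕ)
    (hp : IsGPPath n w k ms) :
    pflow w r0 h k ms = (if k = r0 then 1 else 0) - (if k + 1 = r0 then 1 else 0) := by
  obtain ⟨-, -, hm, -⟩ := hp
  match ms, hm with
  | m :: ms, ⟨hv, hon, _, ht⟩ =>
    rw [pflow, pflow_total w k r0 h hh ms _ _ ht, if_pos (hv.2.trans hh)]
    ring

/-! ### A path is determined by its normal vector -/

lemma subset_visitTail (w : List ℕ) (ms : List ℕ) :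
    ∀ r a, ms.Sublist (visitTail w r a ms) := by
  induction ms with
  | nil => intro r a; simp
  | cons m ms ih =>
    intro r a
    rw [visitTail]
    exact ((ih _ _).cons_cons m).trans (List.sublist_append_right _ _)

lemma subset_visitList (w : List ℕ) (k : ℕ) (ms : List ℕ) :
    ms.Sublist (visitList w k ms) := by
  cases ms with
  | nil => simp
  | cons m ms =>
    rw [visitList]
    exact ((subset_visitTail w ms _ _).cons_cons m).trans (List.sublist_append_right _ _)

lemma coeff_ne_zero (w : List ℕ) (j : ℕ) (ms : List ℕ) (hnd : ms.Nodup) :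
    ∀ r, coeff w r ms j ≠ 0 ↔ j ∈ ms := by
  induction ms with
  | nil => intro r; simp [coeff, pathSwitches]
  | cons m ms ih =>
    intro r
    rw [List.nodup_cons] at hnd
    have := ih hnd.2 (otherWire w m r)
    rw [coeff_cons, List.mem_cons]
    by_cases c : m = j
    · subst c
      have h0 : coeff w (otherWire w m r) ms m = 0 := by
        by_contra h; exact hnd.1 (this.1 h)
      rw [h0, if_pos rfl]
      split_ifs <;> simp
    · rw [if_neg c, zero_add, this]
      constructor
      · exact Or.inr
      · rintro (h | h)
        · exact absurd h.symm c
        · exact h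

lemma travel_unique (w : List ℕ) (k : ℕ) (ms : List ℕ) :
    ∀ r a ms', TravelOK w k r a ms → TravelOK w k r a ms' → (visitTail w r a ms).Nodup →
      (visitTail w r a ms').Nodup → (∀ j, j ∈ ms ↔ j ∈ ms') → ms = ms' := by
  induction ms with
  | nil =>
    intro r a ms' _ _ _ _ h
    exact (List.eq_nil_iff_forall_not_mem.2 fun j hj => by simpa using (h j).2 hj).symm
  | cons m ms ih =>
    intro r a ms' t t' nd nd' h
    cases ms' with
    | nil => exact absurd ((h m).1 (by simp)) (by simp)
    | cons m' ms' =>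
      obtain ⟨hv, hon, hdir, -, ht⟩ := t
      obtain ⟨hv', hon', hdir', -, ht'⟩ := t'
      rw [visitTail, List.nodup_append] at nd nd'
      obtain ⟨-, nd, dj⟩ := nd
      obtain ⟨-, nd', dj'⟩ := nd'
      rw [List.nodup_cons] at nd nd'
      have hs := subset_visitTail w ms (otherWire w m r) m
      have hs' := subset_visitTail w ms' (otherWire w m' r) m'
      by_cases c : m = m'
      · subst c
        congr 1
        refine ih _ _ _ ht ht' nd.2 nd'.2 fun j => ?_
        have hj := h j
        simp only [List.mem_cons] at hj
        by_cases e : j = m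
        · subst e
          exact ⟨fun q => absurd (hs.subset q) nd.1, fun q => absurd (hs'.subset q) nd'.1⟩
        · simpa [e] using hj
      · exfalso
        have a1 : m' ∈ ms := by
          have := (h m').2 (by simp)
          rw [List.mem_cons] at this
          exact this.resolve_left (Ne.symm c)
        have a2 : m ∈ ms' := by
          have := (h m).1 (by simp)
          rw [List.mem_cons] at this
          exact this.resolve_left c
        have b1 : m' ∉ segList w r a m := fun q =>
          dj m' q m' (List.mem_cons_of_mem _ (hs.subset a1)) rfl
        have b2 : m ∉ segList w r a m' := fun q =>
          dj' m q m (List.mem_cons_of_mem _ (hs'.subset a2)) rfl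
        rw [mem_segList] at b1 b2
        by_cases hr : r ≤ k
        · rw [if_pos hr] at hdir hdir'
          rcases lt_or_gt_of_ne c with d | d
          · exact b1 ⟨⟨hv', hon'⟩, by simp; omega, by simp; omega⟩
          · exact b2 ⟨⟨hv, hon⟩, by simp; omega, by simp; omega⟩
        · rw [if_neg hr] at hdir hdir'
          rcases lt_or_gt_of_ne c with d | d
          · exact b2 ⟨⟨hv, hon⟩, by simp; omega, by simp; omega⟩
          · exact b1 ⟨⟨hv', hon'⟩, by simp; omega, by simp; omega⟩

lemma gp_unique (n : ℕ) (w : List ℕ) (k : ℕ) (ms ms' : List ℕ) (hp : IsGPPath n w k ms)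
    (hp' : IsGPPath n w k ms') (h : ∀ j, j ∈ ms ↔ j ∈ ms') : ms = ms' := by
  obtain ⟨-, -, t, nd⟩ := hp
  obtain ⟨-, -, t', nd'⟩ := hp'
  match ms, ms', t, t' with
  | m :: ms, m' :: ms', ⟨hv, hon, _, ht⟩, ⟨hv', hon', _, ht'⟩ =>
    rw [visitList, List.nodup_append] at nd nd'
    obtain ⟨-, nd, dj⟩ := nd
    obtain ⟨-, nd', dj'⟩ := nd'
    rw [List.nodup_cons] at nd nd'
    have hs := subset_visitTail w ms (otherWire w m k) m
    have hs' := subset_visitTail w ms' (otherWire w m' k) m'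
    by_cases c : m = m'
    · subst c
      congr 1
      refine travel_unique w k ms _ _ _ ht ht' nd.2 nd'.2 fun j => ?_
      have hj := h j
      simp only [List.mem_cons] at hj
      by_cases e : j = m
      · subst e
        exact ⟨fun q => absurd (hs.subset q) nd.1, fun q => absurd (hs'.subset q) nd'.1⟩
      · simpa [e] using hj
    · exfalso
      have a1 : m' ∈ m :: ms := (h m').2 (by simp)
      have a2 : m ∈ m' :: ms' := (h m).1 (by simp)
      rw [List.mem_cons] at a1 a2
      have a1 := a1.resolve_left (Ne.symm c)
      have a2 := a2.resolve_left c
      rcases lt_or_gt_of_ne c with d | d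
      · exact dj m' ((mem_tailList ..).2 ⟨⟨hv', hon'⟩, d⟩) m'
          (List.mem_cons_of_mem _ (hs.subset a1)) rfl
      · exact dj' m ((mem_tailList ..).2 ⟨⟨hv, hon⟩, d⟩) m
          (List.mem_cons_of_mem _ (hs'.subset a2)) rfl

lemma travel_valid (w : List ℕ) (k : ℕ) (ms : List ℕ) :
    ∀ r a, TravelOK w k r a ms → ∀ j ∈ ms, ValidNode w j := by
  induction ms with
  | nil => simp
  | cons m ms ih =>
    intro r a ht j hj
    obtain ⟨hv, -, -, -, ht⟩ := ht
    rcases List.mem_cons.1 hj with rfl | hj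
    · exact hv
    · exact ih _ _ ht j hj

lemma gp_valid (n : ℕ) (w : List ℕ) (k : ℕ) (ms : List ℕ) (hp : IsGPPath n w k ms) :
    ∀ j ∈ ms, ValidNode w j := by
  obtain ⟨-, -, t, -⟩ := hp
  match ms, t with
  | m :: ms, ⟨hv, hon, _, ht⟩ =>
    intro j hj
    rcases List.mem_cons.1 hj with rfl | hj
    · exact hv
    · exact travel_valid w k ms _ _ ht j hj

lemma gp_inj (n : ℕ) (w : List ℕ) (hw : w.length = Dim n) (k : ℕ) (ms ms' : List ℕ)
    (hp : IsGPPath n w k ms) (hp' : IsGPPath n w k ms')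
    (h : normalVec n w (k, ms) = normalVec n w (k, ms')) : ms = ms' := by
  refine gp_unique n w k ms ms' hp hp' fun j => ?_
  have n1 : ms.Nodup := hp.2.2.2.sublist (subset_visitList w k ms)
  have n2 : ms'.Nodup := hp'.2.2.2.sublist (subset_visitList w k ms')
  by_cases hj : ValidNode w j
  · have := congrFun h ⟨j - 1, by have := hj.1; have := hj.2; omega⟩
    simp only [normalVec] at this
    rw [Nat.sub_add_cancel hj.1] at this
    rw [← coeff_ne_zero w j ms n1 k, ← coeff_ne_zero w j ms' n2 k, this]
  · exact ⟨fun q => absurd (gp_valid n w k ms hp j q) hj,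
      fun q => absurd (gp_valid n w k ms' hp' j q) hj⟩

/-! ### The flow determines the vector -/

lemma flow_succ (n : ℕ) (w : List ℕ) (r h : ℕ) (x : Fin (Dim n) → ℝ) (hh : h < Dim n) :
    flow n w r (h + 1) x = flow n w r h x + sgn w r (h + 1) * x ⟨h, hh⟩ := by
  have e : ∀ j : Fin (Dim n), (if (j : ℕ) + 1 ≤ h + 1 then sgn w r (j + 1) * x j else 0) =
      (if (j : ℕ) + 1 ≤ h then sgn w r (j + 1) * x j else 0) +
      (if j = ⟨h, hh⟩ then sgn w r (h + 1) * x ⟨h, hh⟩ else 0) := by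
    intro j
    rcases lt_trichotomy (j : ℕ) h with c | c | c
    · have : j ≠ ⟨h, hh⟩ := by simp [Fin.ext_iff]; omega
      rw [if_pos (by omega), if_pos (by omega), if_neg this, add_zero]
    · have : j = ⟨h, hh⟩ := Fin.ext c
      subst this
      simp
    · have : j ≠ ⟨h, hh⟩ := by simp [Fin.ext_iff]; omega
      rw [if_neg (by omega), if_neg (by omega), if_neg this, add_zero]
  unfold flow
  rw [Finset.sum_congr rfl fun j _ => e j, Finset.sum_add_distrib, Finset.sum_ite_eq',
    if_pos (Finset.mem_univ _)]

lemma flow_zero (n : ℕ) (w : List ℕ) (r : ℕ) (x : Fin (Dim n) → ℝ) : flow n w r 0 x = 0 := by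
  simp [flow]

lemma vec_eq_of_flow (n : ℕ) (w : List ℕ) (hw : w.length = Dim n) (k : ℕ)
    (x y : Fin (Dim n) → ℝ)
    (hup : ∀ r j, r ≤ k → ValidNode w j → NodeOnWire w j r → flow n w r j x = flow n w r j y)
    (hdn : ∀ r j, k < r → ValidNode w j → NodeOnWire w j r →
      flow n w r (j - 1) x = flow n w r (j - 1) y)
    (htot : ∀ r, flow n w r (Dim n) x = flow n w r (Dim n) y) : x = y := by
  have main : ∀ r h, h ≤ Dim n → flow n w r h x = flow n w r h y := by
    intro r
    by_cases hr : r ≤ k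
    · intro h
      induction h with
      | zero => intro _; rw [flow_zero, flow_zero]
      | succ h ih =>
        intro hh
        by_cases c : NodeOnWire w (h + 1) r
        · exact hup r _ hr ⟨by omega, by omega⟩ c
        · rw [flow_succ n w r h x hh, flow_succ n w r h y hh, ih (by omega)]
          simp [sgn, c]
    · intro h hh
      induction hh using Nat.decreasingInduction with
      | self => exact htot r
      | of_succ h hh ih =>
        by_cases c : NodeOnWire w (h + 1) r
        · exact hdn r (h + 1) (by omega) ⟨by omega, by omega⟩ c
        · rw [flow_succ n w r h x hh, flow_succ n w r h y hh] at ih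
          simpa [sgn, c] using ih
  funext j
  have c : NodeOnWire w ((j : ℕ) + 1) (wireX w (j + 1)) := Or.inl rfl
  have h1 := main (wireX w (j + 1)) (j + 1) j.2
  rw [flow_succ n w _ j x j.2, flow_succ n w _ j y j.2, main _ j j.2.le] at h1
  have h2 : sgn w (wireX w (j + 1)) (j + 1) ≠ 0 := by
    unfold sgn; rw [if_pos c]; split_ifs <;> simp
  exact mul_left_cancel₀ h2 (add_left_cancel h1)

/-- extremality of `0` and `1` in `[0,1]` under convex combinations. -/
lemma convex_extreme {ι : Type*} (F : Finset ι) (c g : ι → ℝ) (a : ℝ) (hc : ∀ q, 0 ≤ c q)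
    (h1 : ∑ q ∈ F, c q = 1) (hg : ∀ q ∈ F, 0 < c q → g q = 0 ∨ g q = 1)
    (ha : a = 0 ∨ a = 1) (hs : a = ∑ q ∈ F, c q * g q) (q : ι) (hq : q ∈ F) (hcq : 0 < c q) :
    g q = a := by
  have aux : ∀ s ∈ F, 0 ≤ c s * g s ∧ 0 ≤ c s * (1 - g s) := by
    intro s hsF
    rcases (hc s).eq_or_lt with e | e
    · simp [← e]
    · rcases hg s hsF e with e' | e' <;> simp [e', e.le]
  rcases ha with rfl | rfl
  · have := (Finset.sum_eq_zero_iff_of_nonneg fun s hs => (aux s hs).1).1 hs.symm q hq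
    rcases mul_eq_zero.1 this with h | h
    · exact absurd h hcq.ne'
    · exact h
  · have hz : ∑ s ∈ F, c s * (1 - g s) = 0 := by
      simp only [mul_sub, mul_one, Finset.sum_sub_distrib, h1, ← hs, sub_self]
    have := (Finset.sum_eq_zero_iff_of_nonneg fun s hs => (aux s hs).2).1 hz q hq
    rcases mul_eq_zero.1 this with h | h
    · exact absurd h hcq.ne'
    · linarith

/-- the functional detecting the index `k` of a path. -/
lemma gp_level (n : ℕ) (w : List ℕ) (hw : w.length = Dim n) (K : ℕ) (p : ℕ × List ℕ)
    (hp : p ∈ GP n w) :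
    ∑ r ∈ Finset.range (K + 1), flow n w r (Dim n) (normalVec n w p) =
      if p.1 = K then 1 else 0 := by
  have : ∀ r ∈ Finset.range (K + 1), flow n w r (Dim n) (normalVec n w p) =
      (if p.1 = r then (1 : ℝ) else 0) - (if p.1 + 1 = r then 1 else 0) := by
    intro r _
    have h1 := gp_flow n w hw p.1 r (Dim n) p.2 hp
    rw [gp_total n w p.1 r (Dim n) hw.le p.2 hp] at h1
    rw [show p = (p.1, p.2) from rfl, h1]
    push_cast
    rfl
  rw [Finset.sum_congr rfl this, Finset.sum_sub_distrib, Finset.sum_ite_eq, Finset.sum_ite_eq]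
  simp only [Finset.mem_range]
  split_ifs <;> first | omega | norm_num

/-- Lemma on facet normals of the string cone.
No primitive inward normal vector of a string inequality of `C_i` is contained in the
convex cone generated by the normal vectors of the other string inequalities. -/
theorem statement4 (n : ℕ) (hn : 1 ≤ n) (i : List ℕ) (hi : IsReduced n i) :
    ∀ p ∈ GP n i, ¬ ∃ (F : Finset (ℕ × List ℕ)) (c : (ℕ × List ℕ) → ℝ),
      (∀ q ∈ F, q ∈ GP n i ∧ q ≠ p) ∧ (∀ q, 0 ≤ c q) ∧
      normalVec n i p = ∑ q ∈ F, c q • normalVec n i q := by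
  rintro p hp ⟨F, c, hF, hc, hsum⟩
  have hw : i.length = Dim n := hi.1
  -- all paths with positive weight have the same level, and the weights sum to one
  have hlev : ∀ K, (if p.1 = K then (1 : ℝ) else 0) = ∑ q ∈ F, c q * (if q.1 = K then 1 else 0) := by
    intro K
    rw [← gp_level n i hw K p hp, hsum]
    simp_rw [flow_sum]
    rw [Finset.sum_comm]
    refine Finset.sum_congr rfl fun q hq => ?_
    rw [← Finset.mul_sum, gp_level n i hw K q (hF q hq).1]
  have hk : ∀ q ∈ F, 0 < c q → q.1 = p.1 := by
    intro q hq hcq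
    by_contra hne
    have h0 := hlev q.1
    rw [if_neg (Ne.symm hne)] at h0
    have hnn : ∀ s ∈ F, 0 ≤ c s * (if s.1 = q.1 then (1 : ℝ) else 0) := fun s _ =>
      mul_nonneg (hc s) (by split_ifs <;> norm_num)
    have := (Finset.sum_eq_zero_iff_of_nonneg hnn).1 h0.symm q hq
    simp at this
    exact hcq.ne' this
  have hone : ∑ q ∈ F, c q = 1 := by
    have h0 := hlev p.1
    rw [if_pos rfl] at h0
    rw [h0]
    refine Finset.sum_congr rfl fun q hq => ?_
    rcases (hc q).eq_or_lt with e | e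
    · simp [← e]
    · simp [hk q hq e]
  obtain ⟨q, hq, hcq⟩ : ∃ q ∈ F, 0 < c q := by
    by_contra! hcon
    have : ∑ q ∈ F, c q ≤ 0 := Finset.sum_nonpos hcon
    linarith
  have hqk := hk q hq hcq
  obtain ⟨hqGP, hqp⟩ := hF q hq
  have hfl : ∀ r h, ∀ s ∈ GP n i, flow n i r h (normalVec n i s) = (pflow i r h s.1 s.2 : ℝ) :=
    fun r h s hs => gp_flow n i hw s.1 r h s.2 hs
  have hvec : normalVec n i q = normalVec n i p := by
    refine vec_eq_of_flow n i hw p.1 _ _ ?_ ?_ ?_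
    · intro r j hr hj hjr
      have val : ∀ s ∈ GP n i, s.1 = p.1 →
          flow n i r j (normalVec n i s) = 0 ∨ flow n i r j (normalVec n i s) = 1 := by
        intro s hs hsk
        rw [hfl r j s hs]
        exact_mod_cast gp_up n i s.1 r j (hsk ▸ hr) hj hjr s.2 hs
      refine convex_extreme F c (fun s => flow n i r j (normalVec n i s)) _ hc hone
        (fun s hs hcs => val s (hF s hs).1 (hk s hs hcs)) (val p hp rfl) ?_ q hq hcq
      rw [hsum, flow_sum]
    · intro r j hr hj hjr
      have val : ∀ s ∈ GP n i, s.1 = p.1 →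
          -flow n i r (j - 1) (normalVec n i s) = 0 ∨
          -flow n i r (j - 1) (normalVec n i s) = 1 := by
        intro s hs hsk
        rw [hfl r (j - 1) s hs]
        rcases gp_down n i s.1 r j (hsk ▸ hr) hj hjr s.2 hs with e | e <;> simp [e]
      refine neg_injective (convex_extreme F c
        (fun s => -flow n i r (j - 1) (normalVec n i s)) _ hc hone
        (fun s hs hcs => val s (hF s hs).1 (hk s hs hcs)) (val p hp rfl) ?_ q hq hcq)
      rw [hsum, flow_sum]
      simp
    · intro r
      rw [hfl r _ q hqGP, hfl r _ p hp, gp_total n i q.1 r _ hw.le q.2 hqGP,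
        gp_total n i p.1 r _ hw.le p.2 hp, hqk]
  apply hqp
  obtain ⟨k, ms⟩ := p
  obtain ⟨k', ms'⟩ := q
  simp only at hqk
  subst hqk
  rw [gp_inj n i hw _ ms' ms hqGP hp hvec]

end StringPolytope
end
end

section
/- Let i ∈ Σ_{n+1} and let λ be a regular dominant integral weight. Then the system consisting of the |GP(i)| string inequalities together with the N λ-inequalities is non-redundant for the string polytope Δ_i(λ); equivalently, Δ_i(λ) has exactly |GP(i)| + N facets. -/
open scoped Classical

noncomputable section

namespace StringPolytope

/-! ### General polyhedral lemma -/

section Poly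
variable {m : ℕ} {ι : Type*} [Fintype ι] (A : ι → (Fin m → ℝ) →ₗ[ℝ] ℝ) (b : ι → ℝ)

/-- polyhedron -/
def polySet : Set (Fin m → ℝ) := {x | ∀ i, A i x ≤ b i}

/-- the face where constraint `i` is tight -/
def tightSet (i : ι) : Set (Fin m → ℝ) := {x | x ∈ polySet A b ∧ A i x = b i}

lemma polySet_convex : Convex ℝ (polySet A b) := by
  intro x hx y hy s t hs ht hst i
  have h1 := hx i
  have h2 := hy i
  simp only [map_add, map_smul, smul_eq_mul]
  have : b i = s * b i + t * b i := by rw [← add_mul, hst, one_mul]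
  nlinarith [mul_le_mul_of_nonneg_left h1 hs, mul_le_mul_of_nonneg_left h2 ht]

lemma tightSet_face (i : ι) : IsFaceSet (polySet A b) (tightSet A b i) := by
  refine ⟨⟨fun x hx => hx.1, ?_⟩, ?_⟩
  · intro x hx y hy z hz hzo
    refine ⟨hx, ?_⟩
    obtain ⟨s, t, hs, ht, hst, rfl⟩ := hzo
    have h1 := hx i
    have h2 := hy i
    have h3 := hz.2
    simp only [map_add, map_smul, smul_eq_mul] at h3
    by_contra hne
    have h4 : A i x < b i := lt_of_le_of_ne h1 hne
    have : b i = s * b i + t * b i := by rw [← add_mul, hst, one_mul]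
    nlinarith [mul_lt_mul_of_pos_left h4 hs, mul_le_mul_of_nonneg_left h2 ht.le]
  · intro x hx y hy s t hs ht hst
    refine ⟨polySet_convex A b hx.1 hy.1 hs ht hst, ?_⟩
    simp only [map_add, map_smul, smul_eq_mul, hx.2, hy.2]
    rw [← add_mul, hst, one_mul]

/-- a finite family of pairs with positive second entry admits a uniform small multiplier -/
lemma exists_eps {κ : Type*} [Finite κ] (u v : κ → ℝ) (hv : ∀ i, 0 < v i) :
    ∃ ε : ℝ, 0 < ε ∧ ∀ i, ε * u i < v i := by
  have : Fintype κ := Fintype.ofFinite κ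
  have h : ∀ᶠ ε in nhdsWithin (0:ℝ) (Set.Ioi 0), ∀ i, ε * u i < v i := by
    rw [Filter.eventually_all]
    intro i
    have hc : Filter.Tendsto (fun ε : ℝ => ε * u i) (nhdsWithin 0 (Set.Ioi 0)) (nhds (0 * u i)) :=
      ((continuous_id.mul continuous_const).tendsto 0).mono_left nhdsWithin_le_nhds
    rw [zero_mul] at hc
    exact hc.eventually (gt_mem_nhds (hv i))
  obtain ⟨ε, h1, h2⟩ := (h.and self_mem_nhdsWithin).exists
  exact ⟨ε, h2, h1⟩

lemma face_eq_of_interior {G : Set (Fin m → ℝ)} (hG : IsFaceSet (polySet A b) G)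
    {p : Fin m → ℝ} (hp : p ∈ G) (hstr : ∀ i, A i p < b i) : G = polySet A b := by
  apply Set.Subset.antisymm hG.1.1
  intro s hs
  obtain ⟨ε, hε, h⟩ := exists_eps (fun i => A i (p - s)) (fun i => b i - A i p)
    (fun i => sub_pos.2 (hstr i))
  refine hG.1.2 hs (y := p + ε • (p - s)) ?_ hp ?_
  · intro i
    have := h i
    simp only [map_add, map_smul, smul_eq_mul]
    linarith
  · have h1 : (0:ℝ) < 1 + ε := by linarith
    refine ⟨ε / (1 + ε), 1 / (1 + ε), by positivity, by positivity, by field_simp; ring, ?_⟩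
    ext q
    simp only [Pi.add_apply, Pi.smul_apply, smul_eq_mul, Pi.sub_apply]
    field_simp
    ring

lemma face_subset_tight [Nonempty ι] {G : Set (Fin m → ℝ)} (hG : IsFaceSet (polySet A b) G)
    (hne : G ≠ polySet A b) : ∃ i, G ⊆ tightSet A b i := by
  by_contra hcon
  push Not at hcon
  have h1 : ∀ i, ∃ g ∈ G, A i g < b i := by
    intro i
    obtain ⟨g, hg, hgt⟩ := Set.not_subset.1 (hcon i)
    refine ⟨g, hg, lt_of_le_of_ne (hG.1.1 hg i) fun he => hgt ⟨hG.1.1 hg, he⟩⟩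
  choose g hg hgl using h1
  have hcard : (0:ℝ) < Fintype.card ι := by exact_mod_cast Fintype.card_pos
  refine hne (face_eq_of_interior A b hG (p := ∑ i : ι, (1 / (Fintype.card ι : ℝ)) • g i) ?_ ?_)
  · apply hG.2.sum_mem
    · intro i _; positivity
    · simp [hcard.ne']
    · intro i _; exact hg i
  · intro i
    simp only [map_sum, map_smul, smul_eq_mul]
    have : b i = ∑ j : ι, (1 / (Fintype.card ι : ℝ)) * b i := by
      simp [hcard.ne']
    rw [this]
    apply Finset.sum_lt_sum
    · intro j _
      exact mul_le_mul_of_nonneg_left (hG.1.1 (hg j) i) (by positivity)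
    · exact ⟨i, Finset.mem_univ _, mul_lt_mul_of_pos_left (hgl i) (by positivity)⟩

theorem numFacets_polySet [Nonempty ι] (x0 : Fin m → ℝ) (hx0 : ∀ i, A i x0 < b i)
    (hw : ∀ i, ∃ x, b i < A i x ∧ ∀ j, j ≠ i → A j x ≤ b j) :
    numFacets (polySet A b) = Fintype.card ι := by
  -- relative interior points
  have hz : ∀ i, ∃ z, A i z = b i ∧ ∀ j, j ≠ i → A j z < b j := by
    intro i
    obtain ⟨x, hx, hxo⟩ := hw i
    have h0 := hx0 i
    have hd : 0 < A i x - A i x0 := by linarith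
    set θ := (b i - A i x0) / (A i x - A i x0) with hθ
    have hθ0 : 0 < θ := div_pos (by linarith) hd
    have hθ1 : θ < 1 := by rw [hθ, div_lt_one hd]; linarith
    refine ⟨(1 - θ) • x0 + θ • x, ?_, ?_⟩
    · simp only [map_add, map_smul, smul_eq_mul]
      have : θ * (A i x - A i x0) = b i - A i x0 := by rw [hθ]; field_simp
      linarith
    · intro j hj
      simp only [map_add, map_smul, smul_eq_mul]
      have h1 := mul_lt_mul_of_pos_left (hx0 j) (sub_pos.2 hθ1)
      have h2 := mul_le_mul_of_nonneg_left (hxo j hj) hθ0.le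
      linarith
  choose z hzi hzo using hz
  have hzS : ∀ i, z i ∈ tightSet A b i := by
    intro i
    refine ⟨fun j => ?_, hzi i⟩
    by_cases h : j = i
    · subst h; exact (hzi j).le
    · exact (hzo i j h).le
  have hx0S : x0 ∈ polySet A b := fun i => (hx0 i).le
  have hprop : ∀ i, tightSet A b i ≠ polySet A b := by
    intro i h
    have : x0 ∈ tightSet A b i := h ▸ hx0S
    exact (hx0 i).ne this.2
  have hfacet : ∀ i, IsFacet (polySet A b) (tightSet A b i) := by
    intro i
    refine ⟨tightSet_face A b i, hprop i, ?_⟩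
    intro G hG hGne hsub
    apply Set.Subset.antisymm hsub
    intro g hg
    by_contra hgt
    have hgl : A i g < b i := lt_of_le_of_ne (hG.1.1 hg i) fun he => hgt ⟨hG.1.1 hg, he⟩
    refine hGne (face_eq_of_interior A b hG (p := (1/2 : ℝ) • z i + (1/2 : ℝ) • g) ?_ ?_)
    · exact hG.2 (hsub (hzS i)) hg (by norm_num) (by norm_num) (by norm_num)
    · intro j
      simp only [map_add, map_smul, smul_eq_mul]
      by_cases h : j = i
      · subst h
        have := hzi j
        linarith
      · have h1 := hzo i j h
        have h2 := hG.1.1 hg j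
        linarith
  have hset : {F | IsFacet (polySet A b) F} = Set.range (tightSet A b) := by
    ext F
    constructor
    · intro hF
      obtain ⟨i, hi⟩ := face_subset_tight A b hF.1 hF.2.1
      exact ⟨i, (hF.2.2 _ (tightSet_face A b i) (hprop i) hi).symm⟩
    · rintro ⟨i, rfl⟩
      exact hfacet i
  have hinj : Function.Injective (tightSet A b) := by
    intro i j hij
    by_contra hne
    have : z i ∈ tightSet A b j := hij ▸ hzS i
    exact (hzo i j (Ne.symm hne)).ne this.2
  rw [numFacets, hset, ← Set.image_univ, Set.ncard_image_of_injective _ hinj, Set.ncard_univ,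
    Nat.card_eq_fintype_card]

end Poly


/-! ### Wiring diagram: basic facts -/

lemma state_succ (w : List ℕ) (l : ℕ) (h : l < w.length) :
    wordProd (w.take (l + 1)) = wordProd (w.take l) * sTrans (letterAt w (l + 1)) := by
  unfold wordProd letterAt
  rw [← List.take_concat_get' w l h]
  simp [h]

/-- inversions of a permutation on `{1, …, n+1}` -/
def invSet (n : ℕ) (s : Equiv.Perm ℕ) : Finset (ℕ × ℕ) :=
  (Finset.Icc 1 (n + 1) ×ˢ Finset.Icc 1 (n + 1)).filter (fun q => q.1 < q.2 ∧ s q.2 < s q.1)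

lemma mem_invSet {n : ℕ} {s : Equiv.Perm ℕ} {x y : ℕ} : (x, y) ∈ invSet n s ↔
    (x ∈ Finset.Icc 1 (n + 1) ∧ y ∈ Finset.Icc 1 (n + 1)) ∧ x < y ∧ s y < s x := by
  unfold invSet
  rw [Finset.mem_filter, Finset.mem_product]

lemma sTrans_lt {a x y : ℕ} (hxy : x < y) (hne : ¬ (x = a ∧ y = a + 1)) :
    sTrans a x < sTrans a y := by
  unfold sTrans
  simp only [Equiv.swap_apply_def]
  split_ifs <;> omega

lemma sTrans_mem {n a x : ℕ} (ha : 1 ≤ a ∧ a ≤ n) (hx : x ∈ Finset.Icc 1 (n + 1)) :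
    sTrans a x ∈ Finset.Icc 1 (n + 1) := by
  unfold sTrans
  simp only [Equiv.swap_apply_def, Finset.mem_Icc] at *
  split_ifs <;> omega

lemma inv_erase (n a : ℕ) (ha : 1 ≤ a ∧ a ≤ n) (s : Equiv.Perm ℕ) :
    ((invSet n (s * sTrans a)).erase (a, a + 1)).card ≤ (invSet n s).card := by
  apply Finset.card_le_card_of_injOn (fun q => (sTrans a q.1, sTrans a q.2))
  · rintro ⟨x, y⟩ hq
    rw [Finset.mem_coe, Finset.mem_erase, mem_invSet] at hq
    rw [Finset.mem_coe, mem_invSet]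
    refine ⟨⟨sTrans_mem ha hq.2.1.1, sTrans_mem ha hq.2.1.2⟩, sTrans_lt hq.2.2.1 ?_, hq.2.2.2⟩
    rintro ⟨h1, h2⟩
    exact hq.1 (Prod.ext h1 h2)
  · rintro ⟨x, y⟩ _ ⟨x', y'⟩ _ h
    simpa using h

lemma inv_step (n a : ℕ) (ha : 1 ≤ a ∧ a ≤ n) (s : Equiv.Perm ℕ) :
    (invSet n (s * sTrans a)).card ≤ (invSet n s).card + (if s a < s (a + 1) then 1 else 0) := by
  have h := inv_erase n a ha s
  split_ifs with hlt
  · have := Finset.pred_card_le_card_erase (s := invSet n (s * sTrans a)) (a := (a, a + 1))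
    omega
  · rw [Finset.erase_eq_of_notMem] at h
    · simpa using h
    · rw [mem_invSet]
      rintro ⟨_, _, h3⟩
      exact hlt (by simpa [sTrans] using h3)

lemma longestPerm_apply (n k : ℕ) :
    longestPerm n k = if 1 ≤ k ∧ k ≤ n + 1 then n + 2 - k else k := rfl

lemma inv_long (n : ℕ) : n * (n + 1) / 2 ≤ (invSet n (longestPerm n)).card := by
  have h1 : invSet n (longestPerm n) =
      (Finset.Icc 1 (n + 1)).biUnion (fun y => (Finset.Ico 1 y).image (fun x => (x, y))) := by
    ext ⟨x, y⟩
    rw [mem_invSet]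
    simp only [longestPerm_apply, Finset.mem_Icc, Finset.mem_biUnion, Finset.mem_image, Finset.mem_Ico,
      Prod.mk.injEq]
    constructor
    · rintro ⟨⟨hx, hy⟩, hlt, -⟩
      exact ⟨y, hy, x, ⟨hx.1, hlt⟩, rfl, rfl⟩
    · rintro ⟨y', hy', x', hx', rfl, rfl⟩
      refine ⟨⟨⟨hx'.1, by omega⟩, hy'⟩, hx'.2, ?_⟩
      rw [if_pos hy', if_pos ⟨hx'.1, by omega⟩]
      omega
  rw [h1, Finset.card_biUnion]
  · have h2 : ∀ y ∈ Finset.Icc 1 (n + 1),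
        ((Finset.Ico 1 y).image (fun x => (x, y))).card = y - 1 := by
      intro y _
      rw [Finset.card_image_of_injective _ (fun a b h => by simpa using h), Nat.card_Ico]
    rw [Finset.sum_congr rfl h2]
    have h3 : ∑ y ∈ Finset.Icc 1 (n + 1), (y - 1) = ∑ y ∈ Finset.range (n + 1), y := by
      rw [Finset.range_eq_Ico, Finset.sum_Ico_eq_sum_range]
      rw [← Finset.Ico_add_one_right_eq_Icc, Finset.sum_Ico_eq_sum_range]
      simp
    rw [h3, Finset.sum_range_id, Nat.add_sub_cancel, Nat.mul_comm]
  · intro a _ b _ hab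
    rw [Function.onFun, Finset.disjoint_left]
    rintro ⟨x, y⟩ h1 h2
    simp only [Finset.mem_image, Prod.mk.injEq] at h1 h2
    obtain ⟨_, _, _, rfl⟩ := h1
    obtain ⟨_, _, _, rfl⟩ := h2
    exact hab rfl

lemma letter_mem (w : List ℕ) (l : ℕ) (h : l < w.length) : letterAt w (l + 1) ∈ w := by
  unfold letterAt
  simp [h]

/-- In a reduced word every crossing is increasing. -/
lemma crossing_lt (n : ℕ) (w : List ℕ) (hw : IsReduced n w) (j : ℕ) (hj : ValidNode w j) :
    wireX w j < wireY w j := by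
  have key : ∀ l, l ≤ w.length → (invSet n (wordProd (w.take l))).card ≤
      ∑ q ∈ Finset.range l, (if wireX w (q + 1) < wireY w (q + 1) then 1 else 0) := by
    intro l
    induction l with
    | zero =>
      intro _
      simp [wordProd, invSet]
      intro a b _ _ _ _ h
      omega
    | succ l ih =>
      intro hl
      rw [state_succ w l hl, Finset.sum_range_succ]
      refine (inv_step n _ (hw.2.1 _ (letter_mem w l hl)) _).trans ?_
      exact Nat.add_le_add (ih (by omega)) le_rfl
  have h := key w.length le_rfl
  rw [List.take_length, hw.2.2] at h
  have h2 := (inv_long n).trans h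
  rw [← hw.1] at h2
  by_contra hcon
  have h3 : ∑ q ∈ Finset.range w.length, (if wireX w (q + 1) < wireY w (q + 1) then 1 else 0)
      < ∑ q ∈ Finset.range w.length, 1 := by
    apply Finset.sum_lt_sum
    · intro q _; split_ifs <;> omega
    · refine ⟨j - 1, ?_, ?_⟩
      · rw [Finset.mem_range]; have := hj.1; have := hj.2; omega
      · rw [Nat.sub_add_cancel hj.1, if_neg hcon]; omega
  simp at h3
  simp at h2
  omega

/-! ### Telescoping -/

/-- the simple root `α_a` as a function on columns -/
def rootAt (a c : ℕ) : ℝ := (if c = a then 1 else 0) - (if c = a + 1 then 1 else 0)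

lemma root_lam (w : List ℕ) (j k : ℕ) :
    rootAt (letterAt w k) (letterAt w j) - rootAt (letterAt w k) (letterAt w j + 1)
      = - lamCoeff w j k := by
  unfold rootAt lamCoeff
  split_ifs <;> first | omega | norm_num

lemma telescope (w : List ℕ) (N : ℕ) (F : ℕ → ℕ → ℝ) (x : ℕ → ℝ)
    (hF : ∀ l, l < N → ∀ c, F l c = F (l + 1) c + x (l + 1) * rootAt (letterAt w (l + 1)) c)
    (l : ℕ) (hl : l ≤ N) (c : ℕ) :
    F l c = F N c + ∑ k ∈ Finset.Ico l N, x (k + 1) * rootAt (letterAt w (k + 1)) c := by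
  induction hl using Nat.decreasingInduction with
  | self => simp
  | of_succ l hl ih =>
    rw [hF l hl, ih, Finset.sum_eq_sum_Ico_succ_bot hl]
    ring

lemma telescope_lam (w : List ℕ) (N : ℕ) (F : ℕ → ℕ → ℝ) (x : ℕ → ℝ)
    (hF : ∀ l, l < N → ∀ c, F l c = F (l + 1) c + x (l + 1) * rootAt (letterAt w (l + 1)) c)
    (j : Fin N) :
    F (j + 1) (letterAt w (j + 1)) - F (j + 1) (letterAt w (j + 1) + 1) =
      F N (letterAt w (j + 1)) - F N (letterAt w (j + 1) + 1) -
      ∑ k : Fin N, (if (j : ℕ) < (k : ℕ) then lamCoeff w ((j : ℕ) + 1) ((k : ℕ) + 1) else 0)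
        * x (k + 1) := by
  rw [telescope w N F x hF (j + 1) (by omega), telescope w N F x hF (j + 1) (by omega)]
  rw [Fin.sum_univ_eq_sum_range (fun k => (if (j : ℕ) < k then
    lamCoeff w ((j : ℕ) + 1) (k + 1) else 0) * x (k + 1)) N]
  have h : ∑ k ∈ Finset.range N, (if (j : ℕ) < k then
    lamCoeff w ((j : ℕ) + 1) (k + 1) else 0) * x (k + 1) =
    ∑ k ∈ Finset.Ico ((j : ℕ) + 1) N, lamCoeff w ((j : ℕ) + 1) (k + 1) * x (k + 1) := by
    simp only [ite_mul, zero_mul]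
    rw [← Finset.sum_filter]
    apply Finset.sum_congr _ (fun _ _ => rfl)
    ext k
    simp only [Finset.mem_filter, Finset.mem_range, Finset.mem_Ico]
    omega
  rw [h, add_sub_add_comm, ← Finset.sum_sub_distrib, sub_eq_add_neg (_ - _), ← Finset.sum_neg_distrib]
  congr 1
  apply Finset.sum_congr rfl
  intro k _
  rw [← mul_sub, root_lam]
  ring



/-! ### Counting functions of a path -/

/-- number of pieces of the path covering wire `q` at level `l` (just below node `t_l`) -/
def covN (w : List ℕ) (l q : ℕ) : ℕ → ℕ → List ℕ → ℕ
  | r, a, [] => if r = q ∧ a ≤ l ∧ l < w.length + 1 then 1 else 0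
  | r, a, m :: ms => (if r = q ∧ min a m ≤ l ∧ l < max a m then 1 else 0) +
      covN w l q (otherWire w m r) m ms

/-- number of straight passes at node `j` along wire `q` -/
def strN (w : List ℕ) (j q : ℕ) : ℕ → ℕ → List ℕ → ℕ
  | r, a, [] => if r = q ∧ a < j ∧ j < w.length + 1 then 1 else 0
  | r, a, m :: ms => (if r = q ∧ min a m < j ∧ j < max a m then 1 else 0) +
      strN w j q (otherWire w m r) m ms

/-- number of switches at node `j` from wire `q` -/
def swN (w : List ℕ) (j q : ℕ) : ℕ → List ℕ → ℕ
  | _, [] => 0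
  | r, m :: ms => (if m = j ∧ r = q then 1 else 0) + swN w j q (otherWire w m r) ms

/-- number of switches at node `j` to wire `q` -/
def outN (w : List ℕ) (j q : ℕ) : ℕ → List ℕ → ℕ
  | _, [] => 0
  | r, m :: ms => (if m = j ∧ otherWire w m r = q then 1 else 0) +
      outN w j q (otherWire w m r) ms

lemma up_above (w : List ℕ) (k j q : ℕ) (hq : q ≤ k) (hj : 1 ≤ j) (ms : List ℕ) :
    ∀ r a, TravelOK w k r a ms → covN w (j - 1) q r a ms =
      strN w j q r a ms + outN w j q r ms + (if a = j ∧ r = q then 1 else 0) := by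
  induction ms with
  | nil =>
    rintro r a ⟨rfl, -⟩
    have : ¬ (k + 1 = q) := by omega
    simp [covN, strN, outN, this]
  | cons m ms ih =>
    rintro r a ⟨-, -, hdir, -, hrest⟩
    simp only [covN, strN, outN]
    rw [ih _ _ hrest]
    generalize strN w j q (otherWire w m r) m ms = S
    generalize outN w j q (otherWire w m r) ms = O
    by_cases hr : r = q
    · rw [if_pos (by omega)] at hdir
      simp only [hr, true_and, and_true]
      split_ifs <;> omega
    · simp only [hr, false_and, and_false, if_false]
      omega

lemma up_below (w : List ℕ) (k j q : ℕ) (hq : q ≤ k) (ms : List ℕ) :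
    ∀ r a, TravelOK w k r a ms → covN w j q r a ms = strN w j q r a ms + swN w j q r ms := by
  induction ms with
  | nil =>
    rintro r a ⟨rfl, -⟩
    have : ¬ (k + 1 = q) := by omega
    simp [covN, strN, swN, this]
  | cons m ms ih =>
    rintro r a ⟨-, -, hdir, -, hrest⟩
    simp only [covN, strN, swN]
    rw [ih _ _ hrest]
    generalize strN w j q (otherWire w m r) m ms = S
    generalize swN w j q (otherWire w m r) ms = O
    by_cases hr : r = q
    · rw [if_pos (by omega)] at hdir
      simp only [hr, true_and, and_true]
      split_ifs <;> omega
    · simp only [hr, false_and, and_false, if_false]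
      omega

lemma down_above (w : List ℕ) (k j q : ℕ) (hq : k < q) (hj : 1 ≤ j) (hj' : j ≤ w.length)
    (ms : List ℕ) : ∀ r a, TravelOK w k r a ms →
      covN w (j - 1) q r a ms = strN w j q r a ms + swN w j q r ms := by
  induction ms with
  | nil =>
    rintro r a ⟨-, -⟩
    simp only [covN, strN, swN]
    split_ifs <;> omega
  | cons m ms ih =>
    rintro r a ⟨-, -, hdir, -, hrest⟩
    simp only [covN, strN, swN]
    rw [ih _ _ hrest]
    generalize strN w j q (otherWire w m r) m ms = S
    generalize swN w j q (otherWire w m r) ms = O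
    by_cases hr : r = q
    · rw [if_neg (by omega)] at hdir
      simp only [hr, true_and, and_true]
      split_ifs <;> omega
    · simp only [hr, false_and, and_false, if_false]
      omega

lemma down_below (w : List ℕ) (k j q : ℕ) (hq : k < q) (hj' : j ≤ w.length) (ms : List ℕ) :
    ∀ r a, TravelOK w k r a ms → covN w j q r a ms =
      strN w j q r a ms + outN w j q r ms + (if a = j ∧ r = q then 1 else 0) := by
  induction ms with
  | nil =>
    rintro r a ⟨-, -⟩
    simp only [covN, strN, outN]
    split_ifs <;> omega
  | cons m ms ih =>
    rintro r a ⟨-, -, hdir, -, hrest⟩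
    simp only [covN, strN, outN]
    rw [ih _ _ hrest]
    generalize strN w j q (otherWire w m r) m ms = S
    generalize outN w j q (otherWire w m r) ms = O
    by_cases hr : r = q
    · rw [if_neg (by omega)] at hdir
      simp only [hr, true_and, and_true]
      split_ifs <;> omega
    · simp only [hr, false_and, and_false, if_false]
      omega

lemma otherWire_on (w : List ℕ) (m r : ℕ) : NodeOnWire w m (otherWire w m r) := by
  unfold NodeOnWire otherWire
  split_ifs
  · exact Or.inr rfl
  · exact Or.inl rfl

lemma cov_off (w : List ℕ) (k j q : ℕ) (hj : 1 ≤ j) (hj' : j ≤ w.length)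
    (hq : ¬ NodeOnWire w j q) (ms : List ℕ) :
    ∀ r a, (a = j → r ≠ q) → TravelOK w k r a ms →
      covN w (j - 1) q r a ms = covN w j q r a ms := by
  induction ms with
  | nil =>
    rintro r a ha ⟨-, -⟩
    simp only [covN]
    by_cases hr : r = q
    · have : a ≠ j := fun h => ha h hr
      split_ifs <;> omega
    · simp [hr]
  | cons m ms ih =>
    rintro r a ha ⟨-, hon, hdir, -, hrest⟩
    simp only [covN]
    rw [ih _ m _ hrest]
    · by_cases hr : r = q
      · have h1 : a ≠ j := fun h => ha h hr
        have h2 : m ≠ j := fun h => hq (by rw [← h, ← hr]; exact hon)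
        split_ifs <;> omega
      · simp [hr]
    · intro h h2
      apply hq
      rw [← h, ← h2]
      exact otherWire_on w m r

lemma out_eq_sw (w : List ℕ) (k j : ℕ) (hne : wireX w j ≠ wireY w j) (ms : List ℕ) :
    ∀ r a, TravelOK w k r a ms →
      outN w j (wireX w j) r ms = swN w j (wireY w j) r ms ∧
      outN w j (wireY w j) r ms = swN w j (wireX w j) r ms := by
  induction ms with
  | nil => intro r a _; simp [outN, swN]
  | cons m ms ih =>
    rintro r a ⟨-, hon, -, -, hrest⟩
    obtain ⟨h1, h2⟩ := ih _ _ hrest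
    simp only [outN, swN, h1, h2]
    by_cases hm : m = j
    · subst hm
      rcases hon with hon | hon <;> simp [otherWire, ← hon, hne, hne.symm]
    · simp [hm]

lemma count_nodesOn (w : List ℕ) (r j : ℕ) :
    (nodesOn w r).count j = if 1 ≤ j ∧ j ≤ w.length ∧ NodeOnWire w j r then 1 else 0 := by
  have hnd : (nodesOn w r).Nodup := by
    unfold nodesOn
    apply List.Nodup.filter
    exact List.nodup_range.map (fun a b h => by simpa using h)
  rw [hnd.count]
  have : j ∈ nodesOn w r ↔ 1 ≤ j ∧ j ≤ w.length ∧ NodeOnWire w j r := by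
    unfold nodesOn
    simp only [List.mem_filter, List.mem_map, List.mem_range, decide_eq_true_eq]
    constructor
    · rintro ⟨⟨a, ha, rfl⟩, h⟩
      exact ⟨by omega, by omega, h⟩
    · rintro ⟨h1, h2, h⟩
      exact ⟨⟨j - 1, by omega, by omega⟩, h⟩
  simp [this]

lemma count_filter_if (l : List ℕ) (p : ℕ → Bool) (j : ℕ) :
    (l.filter p).count j = if p j then l.count j else 0 := by
  split_ifs with h
  · rw [List.count_filter h]
  · rw [List.count_eq_zero]
    simp [h]

lemma count_visit (w : List ℕ) (k j : ℕ) (hne : wireX w j ≠ wireY w j) (hj : 1 ≤ j)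
    (hj' : j ≤ w.length) (ms : List ℕ) :
    ∀ r a, TravelOK w k r a ms → (visitTail w r a ms).count j =
      strN w j (wireX w j) r a ms + strN w j (wireY w j) r a ms +
      swN w j (wireX w j) r ms + swN w j (wireY w j) r ms := by
  have key : ∀ (r : ℕ) (c : Prop) [Decidable c],
      (if c then (if NodeOnWire w j r then 1 else 0) else 0) =
      (if r = wireX w j ∧ c then 1 else 0) + (if r = wireY w j ∧ c then 1 else 0) := by
    intro r c _
    unfold NodeOnWire
    by_cases h1 : r = wireX w j
    · subst h1
      simp [hne]
    · by_cases h2 : r = wireY w j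
      · subst h2
        simp [hne.symm]
      · simp [h1, h2, Ne.symm h1, Ne.symm h2]
  induction ms with
  | nil =>
    rintro r a -
    simp only [visitTail, tailList, strN, swN, count_filter_if, count_nodesOn, hj, hj', true_and,
      decide_eq_true_eq]
    rw [key]
    have : j < w.length + 1 := by omega
    simp [this]
  | cons m ms ih =>
    rintro r a ⟨-, hon, -, -, hrest⟩
    simp only [visitTail, List.count_append, List.count_cons, ih _ _ hrest]
    simp only [segList, strN, swN, count_filter_if, count_nodesOn, hj, hj', true_and,
      decide_eq_true_eq]
    rw [key]
    have h2 : (if (m == j) = true then 1 else 0) = (if m = j ∧ r = wireX w j then 1 else 0) +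
        (if m = j ∧ r = wireY w j then 1 else 0) := by
      by_cases hm : m = j
      · subst hm
        rcases hon with hon | hon
        · simp [← hon, hne]
        · simp [← hon, hne.symm]
      · simp [hm]
    rw [h2]
    ring

lemma str_forbidden (w : List ℕ) (k j q : ℕ) (hj : 1 ≤ j) (hj' : j ≤ w.length)
    (hon : NodeOnWire w j q) (hf : Forbidden w k j q) (ms : List ℕ) :
    ∀ r a, TravelOK w k r a ms → strN w j q r a ms = 0 := by
  have hmem : j ∈ nodesOn w q := by
    rw [← List.count_pos_iff, count_nodesOn]
    simp [hj, hj', hon]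
  induction ms with
  | nil =>
    rintro r a ⟨-, h⟩
    simp only [strN]
    rw [if_neg]
    rintro ⟨rfl, h1, h2⟩
    refine h j ?_ hf
    unfold tailList
    simp [hmem, h1]
  | cons m ms ih =>
    rintro r a ⟨-, -, -, h, hrest⟩
    simp only [strN]
    rw [if_neg, ih _ _ hrest]
    rintro ⟨rfl, h1, h2⟩
    refine h j ?_ hf
    unfold segList
    rw [List.mem_filter, decide_eq_true_eq]
    exact ⟨hmem, h1, h2⟩

lemma coeff_eq (w : List ℕ) (k j : ℕ) (hlt : wireX w j < wireY w j) (ms : List ℕ) :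
    ∀ r a, TravelOK w k r a ms →
      coeff w r ms j = (swN w j (wireX w j) r ms : ℝ) - swN w j (wireY w j) r ms := by
  induction ms with
  | nil => intro r a _; simp [coeff, pathSwitches, swN]
  | cons m ms ih =>
    rintro r a ⟨-, hon, -, -, hrest⟩
    have := ih _ _ hrest
    unfold coeff at this ⊢
    simp only [pathSwitches, List.map_cons, List.sum_cons, this, swN]
    by_cases hm : m = j
    · subst hm
      have hne := hlt.ne
      rcases hon with hon | hon
      · simp [otherWire, ← hon, hlt, hne]; ring
      · simp [otherWire, ← hon, hne, hne.symm, hlt.not_gt]; ring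
    · simp [hm]

lemma cov_bottom (w : List ℕ) (k q : ℕ) (ms : List ℕ) :
    ∀ r a, a ≤ w.length → TravelOK w k r a ms →
      covN w w.length q r a ms = if q = k + 1 then 1 else 0 := by
  induction ms with
  | nil =>
    rintro r a ha ⟨rfl, -⟩
    simp [covN, ha, eq_comm]
  | cons m ms ih =>
    rintro r a ha ⟨hv, -, -, -, hrest⟩
    simp only [covN]
    rw [ih _ _ hv.2 hrest, if_neg, zero_add]
    have := hv.2
    omega

/-! ### GP paths as travels from the bottom -/

lemma gp_travel {n : ℕ} {w : List ℕ} {k : ℕ} {ms : List ℕ} (h : IsGPPath n w k ms) :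
    TravelOK w k k (w.length + 1) ms ∧ (visitTail w k (w.length + 1) ms).Nodup ∧ ms ≠ [] := by
  obtain ⟨hk1, hkn, hm, hnd⟩ := h
  cases ms with
  | nil => exact hm.elim
  | cons m ms =>
    obtain ⟨hv, hon, hf, ht⟩ := hm
    have hseg : segList w k (w.length + 1) m = tailList w k m := by
      unfold segList tailList
      apply List.filter_congr
      intro j hj
      have : 0 < (nodesOn w k).count j := List.count_pos_iff.2 hj
      rw [count_nodesOn] at this
      have h3 : j ≤ w.length := by
        by_contra hcon
        rw [if_neg (fun h => hcon h.2.1)] at this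
        omega
      have := hv.2
      simp only [decide_eq_decide]
      omega
    refine ⟨⟨hv, hon, ?_, ?_, ht⟩, ?_, by simp⟩
    · rw [if_pos le_rfl]; have := hv.2; omega
    · rw [hseg]; exact hf
    · simp only [visitTail, hseg]
      exact hnd

lemma gp_bottom {n : ℕ} {w : List ℕ} {k : ℕ} {ms : List ℕ} (h : IsGPPath n w k ms) (q : ℕ) :
    covN w w.length q k (w.length + 1) ms =
      (if q = k then 1 else 0) + (if q = k + 1 then 1 else 0) := by
  obtain ⟨ht, -, hne⟩ := gp_travel h
  cases ms with
  | nil => exact (hne rfl).elim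
  | cons m ms =>
    obtain ⟨hv, -, -, -, hrest⟩ := ht
    simp only [covN]
    rw [cov_bottom w k q ms _ _ hv.2 hrest]
    congr 1
    have := hv.2
    by_cases hq : k = q
    · subst hq; simp; omega
    · simp [hq, Ne.symm hq]

/-- uniqueness: the path is determined by its set of switching nodes -/
lemma path_unique (w : List ℕ) (k : ℕ) (ms : List ℕ) :
    ∀ (ms' : List ℕ) (r a : ℕ), TravelOK w k r a ms → TravelOK w k r a ms' →
      (visitTail w r a ms).Nodup → (visitTail w r a ms').Nodup →
      (∀ j, j ∈ ms ↔ j ∈ ms') → ms = ms' := by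
  have hsub : ∀ (ms : List ℕ) (r a : ℕ), ∀ j ∈ ms, j ∈ visitTail w r a ms := by
    intro ms
    induction ms with
    | nil => simp
    | cons m ms ih =>
      intro r a j hj
      simp only [visitTail, List.mem_append, List.mem_cons]
      rcases List.mem_cons.1 hj with h | h
      · exact Or.inr (Or.inl h)
      · exact Or.inr (Or.inr (ih _ _ j h))
  have hmemseg : ∀ r a b m, ValidNode w m → NodeOnWire w m r → min a b < m → m < max a b →
      m ∈ segList w r a b := by
    intro r a b m hv hon h1 h2
    unfold segList
    rw [List.mem_filter, decide_eq_true_eq]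
    refine ⟨?_, h1, h2⟩
    rw [← List.count_pos_iff, count_nodesOn, if_pos ⟨hv.1, hv.2, hon⟩]
    omega
  have hbad : ∀ (r a m m' : ℕ) (ms : List ℕ), ValidNode w m' → NodeOnWire w m' r →
      min a m < m' → m' < max a m → m' ∈ m :: ms → ¬ (visitTail w r a (m :: ms)).Nodup := by
    intro r a m m' ms hv hon h1 h2 hmem hnd
    simp only [visitTail] at hnd
    have hd := (List.nodup_append'.1 hnd).2.2
    refine hd (hmemseg r a m m' hv hon h1 h2) ?_
    rcases List.mem_cons.1 hmem with h | h
    · simp [h]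
    · exact List.mem_cons_of_mem _ (hsub _ _ _ _ h)
  induction ms with
  | nil =>
    intro ms' r a _ _ _ _ hiff
    symm
    rw [List.eq_nil_iff_forall_not_mem]
    intro j hj
    exact absurd ((hiff j).2 hj) (by simp)
  | cons m ms ih =>
    intro ms' r a h1 h2 n1 n2 hiff
    cases ms' with
    | nil => exact absurd ((hiff m).1 (by simp)) (by simp)
    | cons m' ms' =>
      obtain ⟨hv, hon, hdir, -, hrest⟩ := h1
      obtain ⟨hv', hon', hdir', -, hrest'⟩ := h2
      have hmm : m = m' := by
        by_contra hne
        have c1 : ¬ (min a m < m' ∧ m' < max a m) := fun h =>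
          hbad r a m m' ms hv' hon' h.1 h.2 ((hiff m').2 (by simp)) n1
        have c2 : ¬ (min a m' < m ∧ m < max a m') := fun h =>
          hbad r a m' m ms' hv hon h.1 h.2 ((hiff m).1 (by simp)) n2
        split_ifs at hdir hdir' <;> omega
      subst hmm
      congr 1
      simp only [visitTail] at n1 n2
      have e1 := List.nodup_cons.1 (List.nodup_append'.1 n1).2.1
      have e2 := List.nodup_cons.1 (List.nodup_append'.1 n2).2.1
      refine ih ms' _ m hrest hrest' e1.2 e2.2 ?_
      intro j
      have := hiff j
      simp only [List.mem_cons] at this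
      constructor
      · intro hj
        rcases this.1 (Or.inr hj) with h | h
        · exact absurd (hsub _ _ _ _ (h ▸ hj)) e1.1
        · exact h
      · intro hj
        rcases this.2 (Or.inr hj) with h | h
        · exact absurd (hsub _ _ _ _ (h ▸ hj)) e2.1
        · exact h



/-! ### The trail of a path -/

/-- orientation (`1` up, `0` down) of wire `q` at level `l` after reversing the path -/
def orient (w : List ℕ) (k : ℕ) (ms : List ℕ) (l q : ℕ) : ℝ :=
  if q ≤ k then 1 - (covN w l q k (w.length + 1) ms : ℝ) else covN w l q k (w.length + 1) ms

/-- the trail exponent at node `j` -/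
def trailC (w : List ℕ) (k : ℕ) (ms : List ℕ) (j : ℕ) : ℝ :=
  orient w k ms (j - 1) (wireX w j) - orient w k ms j (wireY w j)

lemma orient_node {n : ℕ} {w : List ℕ} (hw : IsReduced n w) {k : ℕ} {ms : List ℕ}
    (h : IsGPPath n w k ms) {j : ℕ} (hj : ValidNode w j) :
    orient w k ms (j - 1) (wireX w j) - orient w k ms j (wireX w j) = coeff w k ms j ∧
    orient w k ms (j - 1) (wireX w j) + orient w k ms (j - 1) (wireY w j) =
      orient w k ms j (wireX w j) + orient w k ms j (wireY w j) ∧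
    (trailC w k ms j = 0 ∨ trailC w k ms j = 1) := by
  have hlt := crossing_lt n w hw j hj
  obtain ⟨ht, hnd, -⟩ := gp_travel h
  obtain ⟨hj1, hj2⟩ := hj
  have hout := out_eq_sw w k j hlt.ne ms _ _ ht
  have hcnt := count_visit w k j hlt.ne hj1 hj2 ms _ _ ht
  have hle : (visitTail w k (w.length + 1) ms).count j ≤ 1 := List.nodup_iff_count_le_one.1 hnd j
  rw [hcnt] at hle
  rw [coeff_eq w k j hlt ms _ _ ht]
  have hb : ¬ (w.length + 1 = j) := by omega
  have ox : otherWire w j (wireX w j) = wireY w j := by simp [otherWire]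
  have oy : otherWire w j (wireY w j) = wireX w j := by simp [otherWire, hlt.ne]
  have fX := str_forbidden w k j (wireX w j) hj1 hj2 (Or.inl rfl)
  have fY := str_forbidden w k j (wireY w j) hj1 hj2 (Or.inr rfl)
  have a1 := up_above w k j (wireX w j)
  have a2 := up_above w k j (wireY w j)
  have b1 := up_below w k j (wireX w j)
  have b2 := up_below w k j (wireY w j)
  have c1 := down_above w k j (wireX w j)
  have c2 := down_above w k j (wireY w j)
  have d1 := down_below w k j (wireX w j)
  have d2 := down_below w k j (wireY w j)
  unfold Forbidden at fX fY
  rw [ox] at fX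
  rw [oy] at fY
  unfold trailC orient
  by_cases hx : wireX w j ≤ k
  · by_cases hy : wireY w j ≤ k
    · have z := fX (Or.inl ⟨hx, hy, hlt⟩) ms _ _ ht
      simp only [if_pos hx, if_pos hy, a1 hx hj1 ms _ _ ht, a2 hy hj1 ms _ _ ht, b1 hx ms _ _ ht,
        b2 hy ms _ _ ht, hb, false_and, if_false, hout.1, hout.2]
      rw [z] at hle ⊢
      refine ⟨by push_cast; ring, by push_cast; ring, ?_⟩
      generalize strN w j (wireY w j) k (w.length + 1) ms = S at *
      have : S = 0 ∨ S = 1 := by omega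
      rcases this with rfl | rfl
      · left; push_cast; ring
      · right; push_cast; ring
    · have hy' := not_le.1 hy
      simp only [if_pos hx, if_neg hy, a1 hx hj1 ms _ _ ht, c2 hy' hj1 hj2 ms _ _ ht,
        b1 hx ms _ _ ht, d2 hy' hj2 ms _ _ ht, hb, false_and, if_false, hout.1, hout.2]
      refine ⟨by push_cast; ring, by push_cast; ring, ?_⟩
      generalize strN w j (wireY w j) k (w.length + 1) ms = S1 at *
      generalize strN w j (wireX w j) k (w.length + 1) ms = S2 at *
      generalize swN w j (wireY w j) k ms = S3 at *
      generalize swN w j (wireX w j) k ms = S4 at *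
      have : S2 + S1 + S4 + S3 = 0 ∨ S2 + S1 + S4 + S3 = 1 := by omega
      rcases this with h | h
      · right
        have h' : (S2 + S1 + S4 + S3 : ℝ) = 0 := by exact_mod_cast h
        push_cast; linarith
      · left
        have h' : (S2 + S1 + S4 + S3 : ℝ) = 1 := by exact_mod_cast h
        push_cast; linarith
  · have hx' := not_le.1 hx
    have hy' : k < wireY w j := by omega
    have hy : ¬ wireY w j ≤ k := by omega
    have z := fY (Or.inr ⟨hy', hx', hlt⟩) ms _ _ ht
    simp only [if_neg hx, if_neg hy, c1 hx' hj1 hj2 ms _ _ ht, c2 hy' hj1 hj2 ms _ _ ht,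
      d1 hx' hj2 ms _ _ ht, d2 hy' hj2 ms _ _ ht, hb, false_and, if_false, hout.1, hout.2]
    rw [z] at hle ⊢
    refine ⟨by push_cast; ring, by push_cast; ring, ?_⟩
    generalize strN w j (wireX w j) k (w.length + 1) ms = S at *
    have : S = 0 ∨ S = 1 := by omega
    rcases this with rfl | rfl
    · left; push_cast; ring
    · right; push_cast; ring

/-- the value at a level of a function on wires, seen as a function on columns -/
lemma state_col (w : List ℕ) (l : ℕ) (hl : l < w.length) (c : ℕ) :
    wordProd (w.take (l + 1)) c =
      if c = letterAt w (l + 1) then wireY w (l + 1)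
      else if c = letterAt w (l + 1) + 1 then wireX w (l + 1)
      else wordProd (w.take l) c := by
  rw [state_succ w l hl]
  simp only [Equiv.Perm.mul_apply, sTrans, Equiv.swap_apply_def, wireX, wireY, stateAbove,
    Nat.add_sub_cancel]
  split_ifs <;> rfl

lemma state_off (w : List ℕ) (l : ℕ) (c : ℕ) (h1 : c ≠ letterAt w (l + 1))
    (h2 : c ≠ letterAt w (l + 1) + 1) :
    ¬ NodeOnWire w (l + 1) (wordProd (w.take l) c) := by
  simp only [NodeOnWire, wireX, wireY, stateAbove, Nat.add_sub_cancel,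
    EmbeddingLike.apply_eq_iff_eq]
  omega

lemma trail_step {n : ℕ} {w : List ℕ} (hw : IsReduced n w) {k : ℕ} {ms : List ℕ}
    (h : IsGPPath n w k ms) (l : ℕ) (hl : l < w.length) (c : ℕ) :
    orient w k ms l (wordProd (w.take l) c) =
      orient w k ms (l + 1) (wordProd (w.take (l + 1)) c) +
      trailC w k ms (l + 1) * rootAt (letterAt w (l + 1)) c := by
  have hv : ValidNode w (l + 1) := ⟨by omega, by omega⟩
  obtain ⟨-, h2, -⟩ := orient_node hw h hv
  rw [Nat.add_sub_cancel] at h2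
  rw [state_col w l hl c]
  unfold trailC rootAt
  rw [Nat.add_sub_cancel]
  by_cases e1 : c = letterAt w (l + 1)
  · subst e1
    have : wordProd (w.take l) (letterAt w (l + 1)) = wireX w (l + 1) := rfl
    simp [this]
  · by_cases e2 : c = letterAt w (l + 1) + 1
    · subst e2
      have : wordProd (w.take l) (letterAt w (l + 1) + 1) = wireY w (l + 1) := rfl
      simp only [this, e1, if_true, if_false]
      linarith
    · simp only [e1, e2, if_false, sub_zero, mul_zero, add_zero]
      obtain ⟨ht, -, -⟩ := gp_travel h
      have := cov_off w k (l + 1) _ (by omega) (by omega) (state_off w l c e1 e2) ms _ _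
        (fun hh => by omega) ht
      rw [Nat.add_sub_cancel] at this
      unfold orient
      rw [this]

/-- the matrix of the `λ`-inequalities -/
def lamMat (n : ℕ) (w : List ℕ) : Matrix (Fin (Dim n)) (Fin (Dim n)) ℝ :=
  fun j k => (if j = k then 1 else 0) -
    (if (j : ℕ) < (k : ℕ) then lamCoeff w ((j : ℕ) + 1) ((k : ℕ) + 1) else 0)

lemma lamMat_mulVec (n : ℕ) (w : List ℕ) (t : Fin (Dim n) → ℝ) (j : Fin (Dim n)) :
    (lamMat n w).mulVec t j = t j - ∑ k : Fin (Dim n),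
      (if (j : ℕ) < (k : ℕ) then lamCoeff w ((j : ℕ) + 1) ((k : ℕ) + 1) else 0) * t k := by
  simp [Matrix.mulVec, dotProduct, lamMat, sub_mul, Finset.sum_sub_distrib]

lemma lamIneq_iff (n : ℕ) (w : List ℕ) (lam : ℕ → ℤ) (t : Fin (Dim n) → ℝ) (j : Fin (Dim n)) :
    LamIneq n w lam j t ↔ (lamMat n w).mulVec t j ≤ lam (letterAt w ((j : ℕ) + 1)) := by
  rw [lamMat_mulVec, LamIneq, sub_le_iff_le_add]

lemma lamMat_det (n : ℕ) (w : List ℕ) : (lamMat n w).det = 1 := by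
  rw [Matrix.det_of_isUpperTriangular]
  · simp [lamMat]
  · intro i j hij
    simp only [id] at hij
    have h1 : i ≠ j := hij.ne'
    have h2 : ¬ ((i : ℕ) < j) := by
      have : (j : ℕ) < i := hij
      omega
    simp [lamMat, h1, h2]

lemma lamMat_surj (n : ℕ) (w : List ℕ) (g : Fin (Dim n) → ℝ) :
    ∃ t, (lamMat n w).mulVec t = g := by
  refine ⟨(lamMat n w)⁻¹.mulVec g, ?_⟩
  rw [Matrix.mulVec_mulVec, Matrix.mul_nonsing_inv _ (by simp [lamMat_det]), Matrix.one_mulVec]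

lemma lamMat_surj' (n : ℕ) (w : List ℕ) (g : Fin (Dim n) → ℝ) :
    ∃ t, Matrix.vecMul t (lamMat n w) = g := by
  refine ⟨Matrix.vecMul g (lamMat n w)⁻¹, ?_⟩
  rw [Matrix.vecMul_vecMul, Matrix.nonsing_inv_mul _ (by simp [lamMat_det]), Matrix.vecMul_one]

/-- bottom orientation after reversal -/
def botOrient (k q : ℕ) : ℝ :=
  if q ≤ k then 1 - (((if q = k then 1 else 0) + (if q = k + 1 then 1 else 0) : ℕ) : ℝ)
  else (((if q = k then 1 else 0) + (if q = k + 1 then 1 else 0) : ℕ) : ℝ)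

/-- the constant part of the normal vectors of type `k` -/
def botConst (n : ℕ) (w : List ℕ) (k : ℕ) (j : Fin (Dim n)) : ℝ :=
  botOrient k (wordProd w (letterAt w (j + 1))) - botOrient k (wordProd w (letterAt w (j + 1) + 1))

/-- the trail vector -/
def trailVec (n : ℕ) (w : List ℕ) (p : ℕ × List ℕ) (j : Fin (Dim n)) : ℝ :=
  trailC w p.1 p.2 (j + 1)

lemma normal_eq {n : ℕ} {w : List ℕ} (hw : IsReduced n w) {p : ℕ × List ℕ} (hp : p ∈ GP n w) :
    normalVec n w p = botConst n w p.1 + (lamMat n w).mulVec (trailVec n w p) := by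
  obtain ⟨k, ms⟩ := p
  have hp' : IsGPPath n w k ms := hp
  have hlen : w.length = Dim n := hw.1
  have htake : w.take (Dim n) = w := by rw [← hlen, List.take_length]
  funext j
  rw [Pi.add_apply, lamMat_mulVec]
  have ht := telescope_lam w (Dim n) (fun l c => orient w k ms l (wordProd (w.take l) c))
    (trailC w k ms) (fun l hl c => trail_step hw hp' l (hlen ▸ hl) c) j
  have hj : (j : ℕ) < w.length := by rw [hlen]; exact j.2
  have hv : ValidNode w (j + 1) := ⟨by omega, by omega⟩
  obtain ⟨h1, -, -⟩ := orient_node hw hp' hv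
  simp only [state_col w j hj, if_true] at ht
  have hne : ¬ (letterAt w (j + 1) + 1 = letterAt w (j + 1)) := by omega
  simp only [hne, if_false] at ht
  rw [htake] at ht
  have hbot : ∀ q, orient w k ms (Dim n) q = botOrient k q := by
    intro q
    unfold orient botOrient
    rw [← hlen, gp_bottom hp']
  simp only [hbot] at ht
  unfold trailVec botConst normalVec
  simp only
  rw [← h1]
  conv_rhs => rw [add_sub_left_comm, ← ht]
  unfold trailC
  simp only [Nat.add_sub_cancel]
  ring

lemma trail_01 {n : ℕ} {w : List ℕ} (hw : IsReduced n w) {p : ℕ × List ℕ} (hp : p ∈ GP n w)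
    (j : Fin (Dim n)) : trailVec n w p j = 0 ∨ trailVec n w p j = 1 := by
  have hlen : w.length = Dim n := hw.1
  have hj : (j : ℕ) < w.length := by rw [hlen]; exact j.2
  have hv : ValidNode w (j + 1) := ⟨by omega, by omega⟩
  exact (orient_node hw hp hv).2.2

lemma mem_iff_sw (w : List ℕ) (k j : ℕ) (hne : wireX w j ≠ wireY w j) (ms : List ℕ) :
    ∀ r a, TravelOK w k r a ms →
      (j ∈ ms ↔ 0 < swN w j (wireX w j) r ms + swN w j (wireY w j) r ms) := by
  induction ms with
  | nil => simp [swN]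
  | cons m ms ih =>
    rintro r a ⟨hv, hon, -, -, hrest⟩
    simp only [List.mem_cons, swN, ih _ _ hrest]
    by_cases hm : m = j
    · subst hm
      rcases hon with hon | hon <;> simp [← hon]
    · simp [hm, Ne.symm hm]

lemma mem_iff_coeff {n : ℕ} {w : List ℕ} (hw : IsReduced n w) {k : ℕ} {ms : List ℕ}
    (h : IsGPPath n w k ms) {j : ℕ} (hj : ValidNode w j) : j ∈ ms ↔ coeff w k ms j ≠ 0 := by
  have hlt := crossing_lt n w hw j hj
  obtain ⟨ht, hnd, -⟩ := gp_travel h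
  have hcnt := count_visit w k j hlt.ne hj.1 hj.2 ms _ _ ht
  have hle : (visitTail w k (w.length + 1) ms).count j ≤ 1 := List.nodup_iff_count_le_one.1 hnd j
  rw [hcnt] at hle
  rw [coeff_eq w k j hlt ms _ _ ht, mem_iff_sw w k j hlt.ne ms _ _ ht, sub_ne_zero]
  generalize swN w j (wireY w j) k ms = S3 at *
  generalize swN w j (wireX w j) k ms = S4 at *
  rw [Ne, Nat.cast_inj]
  omega

lemma trail_inj {n : ℕ} {w : List ℕ} (hw : IsReduced n w) {p q : ℕ × List ℕ} (hp : p ∈ GP n w)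
    (hq : q ∈ GP n w) (hk : p.1 = q.1) (ht : trailVec n w p = trailVec n w q) : p = q := by
  have hv : normalVec n w p = normalVec n w q := by
    rw [normal_eq hw hp, normal_eq hw hq, hk, ht]
  obtain ⟨k, ms⟩ := p
  obtain ⟨k', ms'⟩ := q
  simp only at hk
  subst hk
  have hp' : IsGPPath n w k ms := hp
  have hq' : IsGPPath n w k ms' := hq
  obtain ⟨t1, n1, -⟩ := gp_travel hp'
  obtain ⟨t2, n2, -⟩ := gp_travel hq'
  congr 1
  refine path_unique w k ms ms' _ _ t1 t2 n1 n2 ?_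
  have key : ∀ j, ValidNode w j → (j ∈ ms ↔ j ∈ ms') := by
    intro j hj
    rw [mem_iff_coeff hw hp' hj, mem_iff_coeff hw hq' hj]
    have hlt : j - 1 < Dim n := by
      have := hj.1
      have := hj.2
      have hlen : w.length = Dim n := hw.1
      omega
    have := congrFun hv ⟨j - 1, hlt⟩
    simp only [normalVec, Nat.sub_add_cancel hj.1] at this
    rw [this]
  intro j
  constructor
  · intro h; exact (key j (travel_valid w k ms _ _ t1 j h)).1 h
  · intro h; exact (key j (travel_valid w k ms' _ _ t2 j h)).2 h

lemma GP_finite {n : ℕ} {w : List ℕ} (hw : IsReduced n w) : (GP n w).Finite := by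
  have hfin : (Set.Iic n ×ˢ (Set.pi Set.univ (fun _ : Fin (Dim n) => ({0, 1} : Set ℝ)))).Finite :=
    (Set.finite_Iic n).prod (Set.Finite.pi fun _ => Set.toFinite _)
  refine Set.Finite.of_injOn (f := fun p => (p.1, trailVec n w p)) ?_ ?_ hfin
  · intro p hp
    refine ⟨hp.2.1, fun j _ => ?_⟩
    simpa using trail_01 hw hp j
  · intro p hp q hq h
    simp only [Prod.mk.injEq] at h
    exact trail_inj hw hp hq h.1 h.2

/-! ### The special points -/

/-- the point `t*(y)` -/
def starPt (n : ℕ) (w : List ℕ) (y : ℕ → ℝ) (j : Fin (Dim n)) : ℝ :=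
  y (wireY w (j + 1)) - y (wireX w (j + 1))

lemma star_pair_aux {n : ℕ} {w : List ℕ} (hw : IsReduced n w) (y : ℕ → ℝ) (k : ℕ) (ms : List ℕ) :
    ∀ r a, TravelOK w k r a ms →
      ∑ j : Fin (Dim n), coeff w r ms (j + 1) * starPt n w y j = y (k + 1) - y r := by
  have hlen : w.length = Dim n := hw.1
  induction ms with
  | nil =>
    rintro r a ⟨rfl, -⟩
    simp [coeff, pathSwitches]
  | cons m ms ih =>
    rintro r a ⟨hv, hon, -, -, hrest⟩
    have hlt := crossing_lt n w hw m hv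
    have h := ih _ _ hrest
    have hsplit : ∀ j : Fin (Dim n), coeff w r (m :: ms) (j + 1) =
        (if j = (⟨m - 1, by have := hv.1; have := hv.2; omega⟩ : Fin (Dim n)) then
          (if r < otherWire w m r then 1 else -1) else 0) +
        coeff w (otherWire w m r) ms (j + 1) := by
      intro j
      unfold coeff
      simp only [pathSwitches, List.map_cons, List.sum_cons]
      congr 1
      apply if_congr _ rfl rfl
      rw [Fin.ext_iff]
      have := hv.1
      simp only
      omega
    simp only [hsplit, add_mul, Finset.sum_add_distrib, h, ite_mul, zero_mul,
      Finset.sum_ite_eq', Finset.mem_univ, if_true]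
    simp only [starPt, Nat.sub_add_cancel hv.1]
    rcases hon with hon | hon
    · simp [otherWire, ← hon, hlt]
    · simp [otherWire, ← hon, hlt.ne, hlt.not_gt]

lemma star_pair {n : ℕ} {w : List ℕ} (hw : IsReduced n w) (y : ℕ → ℝ) {p : ℕ × List ℕ}
    (hp : p ∈ GP n w) : stringIneq n w p (starPt n w y) = y (p.1 + 1) - y p.1 :=
  star_pair_aux hw y p.1 p.2 _ _ (gp_travel hp).1

lemma star_lam {n : ℕ} {w : List ℕ} (hw : IsReduced n w) (y : ℕ → ℝ) (j : Fin (Dim n)) :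
    (lamMat n w).mulVec (starPt n w y) j =
      y (n + 2 - letterAt w (j + 1)) - y (n + 1 - letterAt w (j + 1)) := by
  have hlen : w.length = Dim n := hw.1
  have htake : w.take (Dim n) = w := by rw [← hlen, List.take_length]
  rw [lamMat_mulVec]
  have ht := telescope_lam w (Dim n) (fun l c => y (wordProd (w.take l) c))
    (fun l => - (y (wireY w l) - y (wireX w l))) (by
      intro l hl c
      rw [← hlen] at hl
      simp only [state_col w l hl c, rootAt]
      by_cases e1 : c = letterAt w (l + 1)
      · subst e1
        have : wordProd (w.take l) (letterAt w (l + 1)) = wireX w (l + 1) := rfl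
        simp [this]
      · by_cases e2 : c = letterAt w (l + 1) + 1
        · subst e2
          have : wordProd (w.take l) (letterAt w (l + 1) + 1) = wireY w (l + 1) := rfl
          simp [this]
        · simp [e1, e2]) j
  have hj : (j : ℕ) < w.length := by rw [hlen]; exact j.2
  simp only [state_col w j hj, if_true] at ht
  have hne : ¬ (letterAt w (j + 1) + 1 = letterAt w (j + 1)) := by omega
  simp only [hne, if_false] at ht
  rw [htake, hw.2.2] at ht
  obtain ⟨l1, l2⟩ := hw.2.1 _ (letter_mem w j hj)
  simp only [longestPerm_apply] at ht
  rw [if_pos ⟨l1, by omega⟩, if_pos ⟨by omega, by omega⟩] at ht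
  have e : n + 2 - (letterAt w (j + 1) + 1) = n + 1 - letterAt w (j + 1) := by omega
  rw [e] at ht
  simp only [mul_neg, Finset.sum_neg_distrib, sub_neg_eq_add] at ht
  simp only [starPt]
  rw [ht]
  ring



/-! ### Witnesses -/

lemma stringIneq_add (n : ℕ) (w : List ℕ) (p : ℕ × List ℕ) (s t : Fin (Dim n) → ℝ) :
    stringIneq n w p (s + t) = stringIneq n w p s + stringIneq n w p t := by
  simp [stringIneq, mul_add, Finset.sum_add_distrib]

lemma stringIneq_smul (n : ℕ) (w : List ℕ) (p : ℕ × List ℕ) (c : ℝ) (t : Fin (Dim n) → ℝ) :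
    stringIneq n w p (c • t) = c * stringIneq n w p t := by
  simp only [stringIneq, Finset.mul_sum, Pi.smul_apply, smul_eq_mul]
  apply Finset.sum_congr rfl
  intro j _
  ring

lemma lam_pos {n : ℕ} {w : List ℕ} (hw : IsReduced n w) {lam : ℕ → ℤ}
    (hlam : RegularDominant n lam) (j : Fin (Dim n)) :
    (0 : ℝ) < lam (letterAt w ((j : ℕ) + 1)) := by
  have hlen : w.length = Dim n := hw.1
  have hj : (j : ℕ) < w.length := by rw [hlen]; exact j.2
  obtain ⟨l1, l2⟩ := hw.2.1 _ (letter_mem w j hj)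
  exact_mod_cast hlam _ l1 l2

/-- every point may be scaled into the interior of the `λ`-cone -/
lemma exists_scale {n : ℕ} {w : List ℕ} (hw : IsReduced n w) {lam : ℕ → ℤ}
    (hlam : RegularDominant n lam) (t : Fin (Dim n) → ℝ) :
    ∃ ε : ℝ, 0 < ε ∧ ∀ j, (lamMat n w).mulVec (ε • t) j < lam (letterAt w ((j : ℕ) + 1)) := by
  obtain ⟨ε, hε, h⟩ := exists_eps (fun j => (lamMat n w).mulVec t j)
    (fun j : Fin (Dim n) => (lam (letterAt w ((j : ℕ) + 1)) : ℝ)) (lam_pos hw hlam)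
  refine ⟨ε, hε, fun j => ?_⟩
  rw [Matrix.mulVec_smul]
  exact h j

lemma exists_pot (δ : ℕ → ℝ) : ∃ y : ℕ → ℝ, ∀ k, y (k + 1) - y k = δ k :=
  ⟨fun r => ∑ q ∈ Finset.range r, δ q, fun k => by simp [Finset.sum_range_succ]⟩

lemma trail_separate {n : ℕ} {w : List ℕ} (hw : IsReduced n w) {p : ℕ × List ℕ}
    (hp : p ∈ GP n w) : ∃ t, ∀ q ∈ GP n w, q.1 = p.1 → q ≠ p →
      stringIneq n w p t + 1 ≤ stringIneq n w q t := by
  obtain ⟨t, ht⟩ := lamMat_surj' n w (fun j => 1 - 2 * trailVec n w p j)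
  refine ⟨t, fun q hq hk hne => ?_⟩
  have key : ∀ q ∈ GP n w, stringIneq n w q t = (∑ j, botConst n w q.1 j * t j) +
      ∑ j, (1 - 2 * trailVec n w p j) * trailVec n w q j := by
    intro q hq
    have h1 : ∑ j, (1 - 2 * trailVec n w p j) * trailVec n w q j =
        t ⬝ᵥ (lamMat n w).mulVec (trailVec n w q) := by
      rw [Matrix.dotProduct_mulVec, ht]
      rfl
    rw [h1]
    unfold stringIneq
    rw [normal_eq hw hq]
    simp only [Pi.add_apply, add_mul, Finset.sum_add_distrib, dotProduct]
    congr 1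
    apply Finset.sum_congr rfl
    intro j _
    ring
  rw [key p hp, key q hq, hk, add_assoc]
  refine add_le_add le_rfl ?_
  have hex : ∃ j, trailVec n w q j ≠ trailVec n w p j := by
    by_contra hcon
    push Not at hcon
    exact hne (trail_inj hw hq hp hk (funext hcon))
  obtain ⟨j0, hj0⟩ := hex
  have hterm : ∀ j, 0 ≤ (1 - 2 * trailVec n w p j) * trailVec n w q j -
      (1 - 2 * trailVec n w p j) * trailVec n w p j := by
    intro j
    rcases trail_01 hw hp j with h | h <;> rcases trail_01 hw hq j with h' | h' <;>
      rw [h, h'] <;> norm_num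
  have hone : 1 = (1 - 2 * trailVec n w p j0) * trailVec n w q j0 -
      (1 - 2 * trailVec n w p j0) * trailVec n w p j0 := by
    rcases trail_01 hw hp j0 with h | h <;> rcases trail_01 hw hq j0 with h' | h'
    · exact absurd (h'.trans h.symm) hj0
    · rw [h, h']; norm_num
    · rw [h, h']; norm_num
    · exact absurd (h'.trans h.symm) hj0
  have := Finset.single_le_sum (fun j _ => hterm j) (Finset.mem_univ j0)
  rw [← hone, Finset.sum_sub_distrib] at this
  linarith

lemma witness_string {n : ℕ} {w : List ℕ} (hw : IsReduced n w) {lam : ℕ → ℤ}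
    (hlam : RegularDominant n lam) {p : ℕ × List ℕ} (hp : p ∈ GP n w) :
    ∃ x, stringIneq n w p x < 0 ∧ (∀ q ∈ GP n w, q ≠ p → 0 ≤ stringIneq n w q x) ∧
      ∀ j, (lamMat n w).mulVec x j ≤ lam (letterAt w ((j : ℕ) + 1)) := by
  obtain ⟨t, ht⟩ := trail_separate hw hp
  obtain ⟨B, hB⟩ := ((GP_finite hw).image (fun q => stringIneq n w q t)).bddBelow
  obtain ⟨y, hy⟩ := exists_pot (fun k => if k = p.1 then -1/2 - stringIneq n w p t else -B)
  obtain ⟨ε, hε, hl⟩ := exists_scale hw hlam (t + starPt n w y)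
  refine ⟨ε • (t + starPt n w y), ?_, ?_, fun j => (hl j).le⟩
  · rw [stringIneq_smul, stringIneq_add, star_pair hw y hp, hy, if_pos rfl]
    nlinarith
  · intro q hq hne
    rw [stringIneq_smul, stringIneq_add, star_pair hw y hq, hy]
    apply mul_nonneg hε.le
    split_ifs with hk
    · have := ht q hq hk hne
      linarith
    · have := hB ⟨q, hq, rfl⟩
      simp only at this
      linarith

lemma witness_interior {n : ℕ} {w : List ℕ} (hw : IsReduced n w) {lam : ℕ → ℤ}
    (hlam : RegularDominant n lam) :
    ∃ x, (∀ q ∈ GP n w, 0 < stringIneq n w q x) ∧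
      ∀ j, (lamMat n w).mulVec x j < lam (letterAt w ((j : ℕ) + 1)) := by
  obtain ⟨y, hy⟩ := exists_pot (fun _ => 1)
  obtain ⟨ε, hε, hl⟩ := exists_scale hw hlam (starPt n w y)
  refine ⟨ε • starPt n w y, ?_, hl⟩
  intro q hq
  rw [stringIneq_smul, star_pair hw y hq, hy]
  linarith

lemma witness_lam {n : ℕ} {w : List ℕ} (hw : IsReduced n w) {lam : ℕ → ℤ}
    (hlam : RegularDominant n lam) (j : Fin (Dim n)) :
    ∃ x, (lam (letterAt w ((j : ℕ) + 1)) : ℝ) < (lamMat n w).mulVec x j ∧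
      (∀ q ∈ GP n w, 0 ≤ stringIneq n w q x) ∧
      ∀ j', j' ≠ j → (lamMat n w).mulVec x j' ≤ lam (letterAt w ((j' : ℕ) + 1)) := by
  obtain ⟨y, hy⟩ := exists_pot (fun k => (lam (n + 1 - k) : ℝ))
  obtain ⟨u, hu⟩ := lamMat_surj n w (fun j' => if j' = j then 1 else 0)
  have hlen : w.length = Dim n := hw.1
  have hstar : ∀ j', (lamMat n w).mulVec (starPt n w y) j' =
      lam (letterAt w ((j' : ℕ) + 1)) := by
    intro j'
    have hj : (j' : ℕ) < w.length := by rw [hlen]; exact j'.2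
    obtain ⟨l1, l2⟩ := hw.2.1 _ (letter_mem w j' hj)
    have e1 : n + 2 - letterAt w (j' + 1) = (n + 1 - letterAt w (j' + 1)) + 1 := by omega
    have e2 : n + 1 - (n + 1 - letterAt w (j' + 1)) = letterAt w (j' + 1) := by omega
    rw [star_lam hw, e1, hy, e2]
  have hfin : Finite (GP n w) := (GP_finite hw).to_subtype
  obtain ⟨ε, hε, he⟩ := exists_eps (fun q : GP n w => - stringIneq n w q.1 u)
    (fun q => (lam (n + 1 - q.1.1) : ℝ)) (by
      rintro ⟨q, hq⟩
      have h1 : 1 ≤ q.1 := hq.1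
      have h2 : q.1 ≤ n := hq.2.1
      have h3 : 0 < lam (n + 1 - q.1) := hlam _ (by omega) (by omega)
      show (0 : ℝ) < (lam (n + 1 - q.1) : ℝ)
      exact_mod_cast h3)
  refine ⟨starPt n w y + ε • u, ?_, ?_, ?_⟩
  · rw [Matrix.mulVec_add, Matrix.mulVec_smul, hu, Pi.add_apply, hstar]
    simp [hε]
  · intro q hq
    have := he ⟨q, hq⟩
    simp only at this
    rw [stringIneq_add, stringIneq_smul, star_pair hw y hq, hy]
    linarith
  · intro j' hj'
    rw [Matrix.mulVec_add, Matrix.mulVec_smul, hu, Pi.add_apply, hstar]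
    simp [hj']

/-- the constraint functionals of the string polytope -/
def consA (n : ℕ) (w : List ℕ) : (GP n w) ⊕ Fin (Dim n) → (Fin (Dim n) → ℝ) →ₗ[ℝ] ℝ
  | Sum.inl p => - ∑ j, normalVec n w p.1 j • LinearMap.proj j
  | Sum.inr j => (LinearMap.proj j).comp (lamMat n w).mulVecLin

/-- the constraint bounds of the string polytope -/
def consB (n : ℕ) (w : List ℕ) (lam : ℕ → ℤ) : (GP n w) ⊕ Fin (Dim n) → ℝ
  | Sum.inl _ => 0
  | Sum.inr j => lam (letterAt w ((j : ℕ) + 1))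

lemma consA_inl (n : ℕ) (w : List ℕ) (p : GP n w) (x : Fin (Dim n) → ℝ) :
    consA n w (Sum.inl p) x = - stringIneq n w p.1 x := by
  simp [consA, stringIneq]

lemma consA_inr (n : ℕ) (w : List ℕ) (j : Fin (Dim n)) (x : Fin (Dim n) → ℝ) :
    consA n w (Sum.inr j) x = (lamMat n w).mulVec x j := rfl

lemma polytope_eq (n : ℕ) (w : List ℕ) (lam : ℕ → ℤ) :
    stringPolytope n w lam = polySet (consA n w) (consB n w lam) := by
  ext x
  constructor
  · rintro ⟨h1, h2⟩ (p | j)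
    · rw [consA_inl]
      exact neg_nonpos.2 (h1 p.1 p.2)
    · rw [consA_inr]
      exact (lamIneq_iff n w lam x j).1 (h2 j)
  · intro h
    refine ⟨fun p hp => ?_, fun j => ?_⟩
    · have := h (Sum.inl ⟨p, hp⟩)
      rw [consA_inl] at this
      exact neg_nonpos.1 this
    · have := h (Sum.inr j)
      rw [consA_inr] at this
      exact (lamIneq_iff n w lam x j).2 this


/-- non-redundancy for the string polytope.
For a regular dominant integral weight `λ`, the system of the `|GP(i)|` string
inequalities together with the `N` `λ`-inequalities is non-redundant for `Δ_i(λ)`: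
removing any single inequality changes the polytope; equivalently `Δ_i(λ)` has
exactly `|GP(i)| + N` facets. -/
theorem statement6 (n : ℕ) (hn : 1 ≤ n) (i : List ℕ) (hi : IsReduced n i)
    (lam : ℕ → ℤ) (hlam : RegularDominant n lam) :
    (∀ p ∈ GP n i, stringConeExcept n i p ∩ lamCone n i lam ≠ stringPolytope n i lam) ∧
    (∀ j : Fin (Dim n), stringCone n i ∩ lamConeExcept n i lam j ≠ stringPolytope n i lam) ∧
    numFacets (stringPolytope n i lam) = numGP n i + Dim n := by
  refine ⟨?_, ?_, ?_⟩
  · intro p hp heq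
    obtain ⟨x, h1, h2, h3⟩ := witness_string hi hlam hp
    have hx : x ∈ stringConeExcept n i p ∩ lamCone n i lam :=
      ⟨fun q hq hne => h2 q hq hne, fun j => (lamIneq_iff n i lam x j).2 (h3 j)⟩
    rw [heq] at hx
    exact absurd (hx.1 p hp) (not_le.2 h1)
  · intro j heq
    obtain ⟨x, h1, h2, h3⟩ := witness_lam hi hlam j
    have hx : x ∈ stringCone n i ∩ lamConeExcept n i lam j :=
      ⟨fun q hq => h2 q hq, fun j' hj' => (lamIneq_iff n i lam x j').2 (h3 j' hj')⟩
    rw [heq] at hx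
    exact absurd ((lamIneq_iff n i lam x j).1 (hx.2 j)) (not_le.2 h1)
  · have hfin : Finite (GP n i) := (GP_finite hi).to_subtype
    have : Fintype (GP n i) := Fintype.ofFinite _
    have hdim : 0 < Dim n := by
      have : 2 ≤ n * (n + 1) := by nlinarith
      exact Nat.div_pos this (by norm_num)
    have : Nonempty ((GP n i) ⊕ Fin (Dim n)) := ⟨Sum.inr ⟨0, hdim⟩⟩
    obtain ⟨x0, a1, a2⟩ := witness_interior hi hlam
    rw [polytope_eq, numFacets_polySet (consA n i) (consB n i lam) x0]
    · rw [Fintype.card_sum, Fintype.card_fin, numGP, ← Nat.card_eq_fintype_card]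
      rfl
    · rintro (p | j)
      · rw [consA_inl]
        exact neg_lt_zero.2 (a1 p.1 p.2)
      · exact a2 j
    · rintro (p | j)
      · obtain ⟨x, h1, h2, h3⟩ := witness_string hi hlam p.2
        refine ⟨x, ?_, ?_⟩
        · rw [consA_inl]
          exact neg_pos.2 h1
        · rintro (q | j) hne
          · rw [consA_inl]
            exact neg_nonpos.2 (h2 q.1 q.2 fun h => hne (by rw [Subtype.ext h]))
          · exact h3 j
      · obtain ⟨x, h1, h2, h3⟩ := witness_lam hi hlam j
        refine ⟨x, h1, ?_⟩
        rintro (q | j') hne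
        · rw [consA_inl]
          exact neg_nonpos.2 (h2 q.1 q.2)
        · exact h3 j' fun h => hne (by rw [h])

end StringPolytope
end
end
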